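/- For each d ∈ ℕ there is a constant c(d) > 0 such that for every F ∈ 𝔉_d^s and every n ∈ ℕ one has sup over k ∈ ℕ with k ≤ √n of ρ(F^n, F^{n+k}) ≤ c(d) · n^{−1/2}. -/

import Mathlib

open MeasureTheory RealInnerProductSpace
open scoped ENNReal

noncomputable section

abbrev Euc (d : ℕ) := EuclideanSpace ℝ (Fin d)

/-- Convolution of two measures on an additive structure. -/
def mconv {α : Type*} [MeasurableSpace α] [Add α] (μ ν : Measure α) : Measure α :=
  (μ.prod ν).map (fun p => p.1 + p.2)

/-- Convolution power `μ^{*n}`, with `μ^{*0}` the Dirac measure at `0`. -/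
def convPow {α : Type*} [MeasurableSpace α] [AddMonoid α] (μ : Measure α) : ℕ → Measure α
  | 0 => Measure.dirac 0
  | n + 1 => mconv (convPow μ n) μ

/-- Convolution product of a finite family of measures. -/
def convProd {α : Type*} [MeasurableSpace α] [AddMonoid α] :
    ∀ {n : ℕ}, (Fin n → Measure α) → Measure α
  | 0, _ => Measure.dirac 0
  | n + 1, G => mconv (convProd (fun i : Fin n => G i.castSucc)) (G (Fin.last n))

/-- The compound Poisson measure `e(a·μ) = e^{-a} ∑_k a^k μ^{*k}/k!`. -/
def cpois {α : Type*} [MeasurableSpace α] [AddMonoid α] (a : ℝ) (μ : Measure α) : Measure α :=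
  Measure.sum fun k : ℕ =>
    (ENNReal.ofReal (Real.exp (-a) * a ^ k / k.factorial)) • convPow μ k

/-- A measure is symmetric if it is invariant under `x ↦ -x`. -/
def IsSymmMeasure {d : ℕ} (μ : Measure (Euc d)) : Prop :=
  μ.map (fun x => -x) = μ

/-- Characteristic function of a measure on `ℝ^d`. -/
def charFn {d : ℕ} (μ : Measure (Euc d)) (t : Euc d) : ℂ :=
  ∫ x, Complex.exp ((⟪t, x⟫ : ℂ) * Complex.I) ∂μ

/-- Characteristic function of a measure on `ℝ`. -/
def charFn1 (μ : Measure ℝ) (t : ℝ) : ℂ :=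
  ∫ x, Complex.exp (((t * x : ℝ) : ℂ) * Complex.I) ∂μ

/-- Convex polyhedra determined by the directions `t 1, …, t m`. -/
def polyhedraOn {d m : ℕ} (t : Fin m → Euc d) : Set (Set (Euc d)) :=
  {X | ∃ a b : Fin m → EReal,
    X = {x | ∀ j, a j ≤ ((⟪x, t j⟫ : ℝ) : EReal) ∧ ((⟪x, t j⟫ : ℝ) : EReal) ≤ b j}}

/-- The collection `𝔛_m` of convex polyhedra determined by `m` pairs of parallel hyperplanes. -/
def polyhedra (d m : ℕ) : Set (Set (Euc d)) :=
  {X | ∃ t : Fin m → Euc d, X ∈ polyhedraOn t}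

/-- The distance `ρ_m(G,H) = sup_{X ∈ 𝔛_m} |G{X} - H{X}|`. -/
def rhoPoly {d : ℕ} (m : ℕ) (G H : Measure (Euc d)) : ℝ :=
  ⨆ X ∈ polyhedra d m, |(G X).toReal - (H X).toReal|

/-- The Lévy concentration function `Q(μ, b) = sup_x μ[x, x+b]`. -/
def concFn (μ : Measure ℝ) (b : ℝ) : ℝ :=
  ⨆ x : ℝ, (μ (Set.Icc x (x + b))).toReal

/-- `q(H, X) = inf_{‖t‖=1} Q(𝓛(⟨ξ,t⟩), λ{⟨x,t⟩ : x ∈ X})` where `H = 𝓛(ξ)`. -/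
def qFn {d : ℕ} (H : Measure (Euc d)) (X : Set (Euc d)) : ℝ :=
  ⨅ t ∈ {t : Euc d | ‖t‖ = 1},
    concFn (H.map fun x => ⟪x, t⟫) (volume ((fun x => ⟪x, t⟫) '' X)).toReal

/-- The uniform (Kolmogorov) distance on `ℝ^d`. -/
def kolmDist {d : ℕ} (G H : Measure (Euc d)) : ℝ :=
  ⨆ x : Euc d, |(G {y | ∀ i, y i ≤ x i}).toReal - (H {y | ∀ i, y i ≤ x i}).toReal|

/-- The uniform (Kolmogorov) distance on `ℝ`. -/
def kolmDist1 (G H : Measure ℝ) : ℝ :=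
  ⨆ x : ℝ, |(G (Set.Iic x)).toReal - (H (Set.Iic x)).toReal|

end

/-!
Let `X₁, X₂, …` be independent with the symmetric law `F`, let `Q` be a quadrant, and let
`S = X₁ + ⋯ + Xₙ₊₁`. Everything rests on the Hájek kernel `h_Q a = P(S ∈ Q | Xⱼ = a) - P(S ∈ Q)`,
for which Bessel's inequality in `L²` gives `(n + 1) * E[h_Q ^ 2] ≤ P(S ∈ Q)`.

* One step costs `O(1 / √n)`. When `Q` is replaced by a half-space, `P(X₁ + ⋯ + Xₙ + a ∈ Q)` is
  monotone along the line through `0` and `a`, so its change from `0` to `a` is at most its change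
  from `-a` to `a`, which is `|h_Q a - h_Q (-a)|`; by Bessel the mean of `|h_Q|` is at most
  `1 / √(n + 1)`. A quadrant is an intersection of `d` half-spaces.
* Two steps cost only `O(1 / n)`. By symmetry `S - Xⱼ` and `-(S - Xⱼ)` have the same law, so
  `(n + 1) * (F ^ (2 * n) - F ^ (2 * n + 2)) Q` is the expectation of `∑ⱼ h_{Q + S} (Xⱼ)`. The
  quadrant `Q + S` is random and depends on the `Xⱼ`, but the expected supremum of
  `|∑ⱼ h_R (Xⱼ)|` over all quadrants `R` is bounded in terms of `d` alone. This is a chaining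
  argument: `R` is approximated from inside by grid quadrants with an error of measure
  `O(4 ^ (-k))` at level `k`, where there are at most `4 ^ (d * k)` grid cells, and Bessel's
  inequality shows that the kernel of an increment is `O(2 ^ (-k))` except at heavy steps, of
  which only `O(1)` are expected among the `Xⱼ`.

So `k` steps cost `O(k / n)` when `k` is even, and one more single step when `k` is odd.
-/

/-- The law of `m` independent random elements with common distribution `F`. -/
noncomputable abbrev iidLaw {Ω : Type*} [MeasurableSpace Ω] (F : Measure Ω) (m : ℕ) :
    Measure (Fin m → Ω) :=
  Measure.pi fun _ => F

lemma integrable_of_abs_le {Ω : Type*} [MeasurableSpace Ω] {P : Measure Ω} [IsFiniteMeasure P]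
    {f : Ω → ℝ} {C : ℝ} (hf : Measurable f) (hC : ∀ ω, |f ω| ≤ C) : Integrable f P :=
  Integrable.of_bound hf.aestronglyMeasurable C (Filter.Eventually.of_forall hC)

lemma indicator_one_sq {α : Type*} (s : Set α) (a : α) :
    s.indicator (1 : α → ℝ) a ^ 2 = s.indicator 1 a := by
  rcases Set.indicator_eq_zero_or_self s (1 : α → ℝ) a with h | h <;> simp [h]

section ConvolutionPowers

lemma convPow_succ {M : Type*} [MeasurableSpace M] [AddMonoid M] (F : Measure M) (n : ℕ) :
    convPow F (n + 1) = convPow F n ∗ F := rfl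

instance isProbabilityMeasure_convPow {M : Type*} [MeasurableSpace M] [AddMonoid M]
    [MeasurableAdd₂ M] (F : Measure M) [IsProbabilityMeasure F] (n : ℕ) :
    IsProbabilityMeasure (convPow F n) := by
  induction n with
  | zero => exact Measure.dirac.isProbabilityMeasure
  | succ n ih => rw [convPow_succ]; infer_instance

lemma convPow_add {M : Type*} [MeasurableSpace M] [AddMonoid M] [MeasurableAdd₂ M]
    (F : Measure M) [IsProbabilityMeasure F] (m n : ℕ) :
    convPow F (m + n) = convPow F m ∗ convPow F n := by
  induction n with
  | zero => exact (Measure.conv_dirac_zero _).symm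
  | succ n ih => rw [← add_assoc, convPow_succ, ih, convPow_succ, Measure.conv_assoc]

instance isNegInvariant_convPow {G : Type*} [MeasurableSpace G] [AddCommGroup G]
    [MeasurableAdd₂ G] [MeasurableNeg G] (F : Measure G) [IsProbabilityMeasure F]
    [F.IsNegInvariant] (n : ℕ) : (convPow F n).IsNegInvariant := by
  induction n with
  | zero =>
    exact ⟨(Measure.map_dirac' measurable_neg 0).trans (congrArg Measure.dirac neg_zero)⟩
  | succ n ih =>
    have map_neg : (convPow F n ∗ F).map (negAddMonoidHom : G →+ G) =
        (convPow F n).map (negAddMonoidHom : G →+ G) ∗ F.map (negAddMonoidHom : G →+ G) :=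
      Measure.map_conv_addMonoidHom _ measurable_neg
    exact ⟨map_neg.trans (congrArg₂ Measure.conv (Measure.map_neg_eq_self (convPow F n))
      (Measure.map_neg_eq_self F))⟩

variable {M : Type*} [MeasurableSpace M] [AddCommMonoid M] [MeasurableAdd₂ M]
  (F : Measure M) [IsProbabilityMeasure F]

lemma measurePreserving_sum_iidLaw (n : ℕ) :
    MeasurePreserving (fun X : Fin n → M => ∑ i, X i) (iidLaw F n) (convPow F n) := by
  induction n with
  | zero =>
    refine ⟨by fun_prop, ?_⟩
    simp only [Finset.univ_eq_empty, Finset.sum_empty, Measure.map_const, measure_univ, one_smul]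
    rfl
  | succ n ih =>
    have split := ((MeasurePreserving.id F).prod ih).comp
      (measurePreserving_piFinSuccAbove (fun _ : Fin (n + 1) => F) 0)
    have add : MeasurePreserving (fun p : M × M => p.1 + p.2) (F.prod (convPow F n))
        (convPow F (n + 1)) := ⟨by fun_prop, Measure.conv_comm F (convPow F n)⟩
    convert add.comp split using 2 with X
    exact Fin.sum_univ_succAbove X 0

lemma measurePreserving_eval_sum_removeNth_iidLaw (n : ℕ) (j : Fin (n + 1)) :
    MeasurePreserving (fun X : Fin (n + 1) → M => (X j, ∑ i, j.removeNth X i))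
      (iidLaw F (n + 1)) (F.prod (convPow F n)) :=
  ((MeasurePreserving.id F).prod (measurePreserving_sum_iidLaw F n)).comp
    (measurePreserving_piFinSuccAbove (fun _ : Fin (n + 1) => F) j)

lemma integral_comp_sum_iidLaw (n : ℕ) {φ : M → ℝ} (hφ : Measurable φ) :
    ∫ X, φ (∑ i, X i) ∂iidLaw F n = ∫ s, φ s ∂convPow F n := by
  have sum := measurePreserving_sum_iidLaw F n
  rw [← sum.map_eq, integral_map sum.measurable.aemeasurable hφ.aestronglyMeasurable]

lemma integral_comp_eval_sum_iidLaw (n : ℕ) (j : Fin (n + 1)) {φ : M → M → ℝ}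
    (hφ : Measurable φ.uncurry) :
    ∫ X, φ (X j) (∑ i, X i) ∂iidLaw F (n + 1) =
      ∫ p, φ p.1 (p.1 + p.2) ∂F.prod (convPow F n) := by
  have split := measurePreserving_eval_sum_removeNth_iidLaw F n j
  have hφ' : Measurable fun p : M × M => φ p.1 (p.1 + p.2) :=
    hφ.comp (measurable_fst.prodMk (measurable_fst.add measurable_snd))
  rw [← split.map_eq, integral_map split.measurable.aemeasurable hφ'.aestronglyMeasurable]
  simp only [Fin.removeNth_apply, Fin.sum_univ_succAbove _ j]

end ConvolutionPowers

section HajekProjection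

/-- The probability `ν {s | s + a ∈ A}` that `A` is hit by a random element of law `ν` shifted
by `a`, i.e. the conditional probability of the event `S + Y ∈ A` given `Y = a` when `S` has law
`ν` and is independent of `Y`. -/
noncomputable def shiftProb {M : Type*} [MeasurableSpace M] [Add M] (ν : Measure M) (A : Set M)
    (a : M) : ℝ :=
  ν.real ((· + a) ⁻¹' A)

section ShiftProb

variable {M : Type*} [MeasurableSpace M]

lemma shiftProb_nonneg [Add M] (ν : Measure M) (A : Set M) (a : M) : 0 ≤ shiftProb ν A a :=
  measureReal_nonneg

lemma shiftProb_le_one [Add M] (ν : Measure M) [IsZeroOrProbabilityMeasure ν] (A : Set M) (a : M) :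
    shiftProb ν A a ≤ 1 :=
  measureReal_le_one

lemma shiftProb_zero [AddZeroClass M] (ν : Measure M) (A : Set M) :
    shiftProb ν A 0 = ν.real A := by
  simp only [shiftProb, add_zero, Set.preimage_id']

lemma shiftProb_mono [Add M] (ν : Measure M) [IsFiniteMeasure ν] {A B : Set M} (h : A ⊆ B)
    (a : M) : shiftProb ν A a ≤ shiftProb ν B a :=
  measureReal_mono (Set.preimage_mono h)

lemma shiftProb_sdiff [Add M] [MeasurableAdd M] (ν : Measure M) [IsFiniteMeasure ν] {A B : Set M}
    (h : A ⊆ B) (hA : MeasurableSet A) (a : M) :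
    shiftProb ν (B \ A) a = shiftProb ν B a - shiftProb ν A a :=
  measureReal_sdiff (Set.preimage_mono h) (measurable_add_const a hA)

variable [Add M] [MeasurableAdd₂ M]

lemma measurable_shiftProb (ν : Measure M) [SFinite ν] {A : Set M} (hA : MeasurableSet A) :
    Measurable (shiftProb ν A) := by
  have add_meas : Measurable fun p : M × M => p.2 + p.1 := by fun_prop
  exact (measurable_measure_prodMk_left (add_meas hA)).ennreal_toReal

lemma integrable_shiftProb (ν ρ : Measure M) [IsProbabilityMeasure ν] [IsFiniteMeasure ρ]
    {A : Set M} (hA : MeasurableSet A) : Integrable (shiftProb ν A) ρ :=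
  integrable_of_abs_le (measurable_shiftProb ν hA) fun a => by
    rw [abs_of_nonneg (shiftProb_nonneg ν A a)]; exact shiftProb_le_one ν A a

end ShiftProb

lemma integral_shiftProb {M : Type*} [MeasurableSpace M] [AddMonoid M] [MeasurableAdd₂ M]
    (ν ρ : Measure M) [IsProbabilityMeasure ν] [IsProbabilityMeasure ρ] {A : Set M}
    (hA : MeasurableSet A) : ∫ a, shiftProb ν A a ∂ρ = (ν ∗ ρ).real A := by
  have hA' : MeasurableSet ((fun p : M × M => p.1 + p.2) ⁻¹' A) :=
    measurable_fst.add measurable_snd hA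
  rw [Measure.conv, map_measureReal_apply (by fun_prop) hA, measureReal_def,
    Measure.prod_apply_symm hA']
  exact integral_toReal (measurable_measure_prodMk_right hA').aemeasurable
    (Filter.Eventually.of_forall fun a => measure_lt_top _ _)

variable {M : Type*} [MeasurableSpace M] [AddCommMonoid M] [MeasurableAdd₂ M]

/-- The Hájek (first-order Hoeffding) projection kernel of the event `S ∈ A`, where
`S = X₁ + ⋯ + X_{n+1}` with `Xⱼ` independent of law `F`: the centred conditional probability
`P(S ∈ A | Xⱼ = a) - P(S ∈ A)`. -/
noncomputable def hajek (F : Measure M) (n : ℕ) (A : Set M) (a : M) : ℝ :=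
  shiftProb (convPow F n) A a - (convPow F (n + 1)).real A

variable (F : Measure M) [IsProbabilityMeasure F] (n : ℕ)

lemma abs_hajek_le_one (A : Set M) (a : M) : |hajek F n A a| ≤ 1 :=
  abs_sub_le_of_nonneg_of_le (shiftProb_nonneg _ A a) (shiftProb_le_one _ A a) measureReal_nonneg
    measureReal_le_one

lemma hajek_sdiff {A B : Set M} (h : A ⊆ B) (hA : MeasurableSet A) (a : M) :
    hajek F n (B \ A) a = hajek F n B a - hajek F n A a := by
  rw [hajek, shiftProb_sdiff _ h hA, measureReal_sdiff h hA, hajek, hajek]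
  ring

lemma measurable_hajek {A : Set M} (hA : MeasurableSet A) : Measurable (hajek F n A) :=
  (measurable_shiftProb _ hA).sub_const _

lemma integral_hajek {A : Set M} (hA : MeasurableSet A) : ∫ a, hajek F n A a ∂F = 0 := by
  simp only [hajek]
  rw [integral_sub (integrable_shiftProb _ _ hA) (integrable_const _), integral_shiftProb _ _ hA,
    integral_const, probReal_univ, one_smul, convPow_succ, sub_self]

lemma integrable_hajek {A : Set M} (hA : MeasurableSet A) : Integrable (hajek F n A) F :=
  integrable_of_abs_le (measurable_hajek F n hA) (abs_hajek_le_one F n A)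

lemma integrable_hajek_sq {A : Set M} (hA : MeasurableSet A) :
    Integrable (fun a => hajek F n A a ^ 2) F :=
  integrable_of_abs_le ((measurable_hajek F n hA).pow_const 2) fun a => by
    rw [abs_pow]; exact pow_le_one₀ (abs_nonneg _) (abs_hajek_le_one F n A a)

lemma integral_sum_comp_eval_sq {Ω : Type*} [MeasurableSpace Ω] (F : Measure Ω)
    [IsProbabilityMeasure F] (m : ℕ) {g : Ω → ℝ} (hg : MemLp g 2 F) (hg0 : ∫ a, g a ∂F = 0) :
    ∫ X, (∑ j, g (X j)) ^ 2 ∂iidLaw F m = m * ∫ a, g a ^ 2 ∂F := by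
  have hgj (j : Fin m) : MemLp (fun X : Fin m → Ω => g (X j)) 2 (iidLaw F m) :=
    hg.comp_measurePreserving (measurePreserving_eval _ j)
  have mean_zero : ∫ X, (∑ j, fun X : Fin m → Ω => g (X j)) X ∂iidLaw F m = 0 := by
    simp only [Finset.sum_apply]
    rw [integral_finsetSum _ fun j _ => (hgj j).integrable one_le_two]
    simp only [integral_comp_eval (μ := fun _ : Fin m => F) hg.1, hg0, Finset.sum_const_zero]
  have variance_add := ProbabilityTheory.variance_sum_pi (μ := fun _ : Fin m => F)
    (X := fun _ => g) fun _ => hg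
  rw [ProbabilityTheory.variance_of_integral_eq_zero
    (memLp_finsetSum' _ fun j _ => hgj j).aemeasurable mean_zero] at variance_add
  simpa only [Finset.sum_apply, ProbabilityTheory.variance_of_integral_eq_zero hg.aemeasurable hg0,
    Finset.sum_const, Finset.card_univ, Fintype.card_fin, nsmul_eq_mul] using variance_add

lemma integral_comp_eval_mul_indicator_sum {A : Set M} (hA : MeasurableSet A) (j : Fin (n + 1))
    {φ : M → ℝ} (hφ : Integrable φ F) (hφm : Measurable φ) :
    ∫ X, φ (X j) * A.indicator 1 (∑ i, X i) ∂iidLaw F (n + 1) =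
      ∫ a, φ a * shiftProb (convPow F n) A a ∂F := by
  have hind : Measurable (A.indicator (1 : M → ℝ)) := measurable_one.indicator hA
  have shift (a : M) : ∫ s, A.indicator 1 (a + s) ∂convPow F n = shiftProb (convPow F n) A a := by
    have : (fun s => A.indicator (1 : M → ℝ) (a + s)) = ((· + a) ⁻¹' A).indicator 1 := by
      funext s; rw [add_comm]; rfl
    rw [this, integral_indicator_one (measurable_add_const a hA)]; rfl
  rw [integral_comp_eval_sum_iidLaw F n j (φ := fun a s => φ a * A.indicator 1 s)
    ((hφm.comp measurable_fst).mul (hind.comp measurable_snd)), integral_prod]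
  · simp only [integral_const_mul, shift]
  · refine (hφ.comp_fst _).mul_bdd (c := 1) (hind.comp (by fun_prop)).aestronglyMeasurable
      (Filter.Eventually.of_forall fun p => ?_)
    exact (norm_indicator_le_norm_self _ _).trans_eq norm_one

lemma integral_hajek_mul_shiftProb {A : Set M} (hA : MeasurableSet A) :
    ∫ a, hajek F n A a * shiftProb (convPow F n) A a ∂F = ∫ a, hajek F n A a ^ 2 ∂F := by
  have shift (a : M) : hajek F n A a * shiftProb (convPow F n) A a =
      hajek F n A a ^ 2 + (convPow F (n + 1)).real A * hajek F n A a := by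
    simp only [hajek]; ring
  simp only [shift]
  rw [integral_add (integrable_hajek_sq F n hA) ((integrable_hajek F n hA).const_mul _),
    integral_const_mul, integral_hajek F n hA, mul_zero, add_zero]

lemma bessel_hajek {A : Set M} (hA : MeasurableSet A) :
    (n + 1) * ∫ a, hajek F n A a ^ 2 ∂F ≤ (convPow F (n + 1)).real A := by
  set P := iidLaw F (n + 1)
  set v := hajek F n A
  let V (X : Fin (n + 1) → M) : ℝ := ∑ j, v (X j)
  let I (X : Fin (n + 1) → M) : ℝ := A.indicator 1 (∑ i, X i)
  have hv : MemLp v 2 F := (memLp_two_iff_integrable_sq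
    (measurable_hajek F n hA).aestronglyMeasurable).2 (integrable_hajek_sq F n hA)
  have hvj (j : Fin (n + 1)) : MemLp (fun X : Fin (n + 1) → M => v (X j)) 2 P :=
    hv.comp_measurePreserving (measurePreserving_eval _ j)
  have hV : MemLp V 2 P := memLp_finsetSum _ fun j _ => hvj j
  have hI : MemLp I 2 P :=
    .of_bound ((measurable_one.indicator hA).comp (by fun_prop)).aestronglyMeasurable 1 <|
      .of_forall fun X => (norm_indicator_le_norm_self _ _).trans_eq norm_one
  have integral_I : ∫ X, I X ∂P = (convPow F (n + 1)).real A := by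
    rw [integral_comp_sum_iidLaw F (n + 1) (measurable_one.indicator hA), integral_indicator_one hA]
  have integral_VI : ∫ X, V X * I X ∂P = (n + 1) * ∫ a, v a ^ 2 ∂F := by
    have hvI (j : Fin (n + 1)) : Integrable (fun X => v (X j) * I X) P := (hvj j).integrable_mul hI
    simp only [V, Finset.sum_mul]
    rw [integral_finsetSum _ fun j _ => hvI j]
    simp only [v, I, P, integral_comp_eval_mul_indicator_sum F n hA _ (integrable_hajek F n hA)
      (measurable_hajek F n hA), integral_hajek_mul_shiftProb F n hA, Finset.sum_const,
      Finset.card_univ, Fintype.card_fin, nsmul_eq_mul, Nat.cast_add_one]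
  have integral_VV : ∫ X, V X ^ 2 ∂P = (n + 1) * ∫ a, v a ^ 2 ∂F := by
    exact_mod_cast integral_sum_comp_eval_sq F (n + 1) hv (integral_hajek F n hA)
  have expand (X : Fin (n + 1) → M) : (I X - V X) ^ 2 = I X - 2 * (V X * I X) + V X ^ 2 := by
    have : I X ^ 2 = I X := indicator_one_sq A _
    linear_combination this
  have : 0 ≤ ∫ X, (I X - V X) ^ 2 ∂P := integral_nonneg fun X => sq_nonneg _
  simp only [expand] at this
  have hI' : Integrable I P := hI.integrable one_le_two
  have hVI : Integrable (fun X => 2 * (V X * I X)) P := (hV.integrable_mul hI).const_mul 2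
  have hIV : Integrable (fun X => I X - 2 * (V X * I X)) P := hI'.sub hVI
  rw [integral_add hIV hV.integrable_sq, integral_sub hI' hVI, integral_const_mul] at this
  linarith

lemma integral_abs_hajek_le {A : Set M} (hA : MeasurableSet A) :
    ∫ a, |hajek F n A a| ∂F ≤ 1 / √(n + 1) := by
  have hn : (0 : ℝ) < n + 1 := by positivity
  have sq_le : (∫ a, |hajek F n A a| ∂F) ^ 2 ≤ ∫ a, hajek F n A a ^ 2 ∂F := by
    have hv : MemLp (fun a => |hajek F n A a|) 2 F := ((memLp_two_iff_integrable_sq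
      (measurable_hajek F n hA).aestronglyMeasurable).2 (integrable_hajek_sq F n hA)).abs
    have := ProbabilityTheory.variance_nonneg (fun a => |hajek F n A a|) F
    rw [ProbabilityTheory.variance_eq_sub hv] at this
    simpa only [Pi.pow_apply, sq_abs, sub_nonneg] using this
  have bessel : ∫ a, hajek F n A a ^ 2 ∂F ≤ 1 / (n + 1) := by
    rw [le_div_iff₀' hn]
    exact (bessel_hajek F n hA).trans measureReal_le_one
  calc ∫ a, |hajek F n A a| ∂F ≤ √(1 / (n + 1)) := Real.le_sqrt_of_sq_le (sq_le.trans bessel)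
    _ = 1 / √(n + 1) := by rw [Real.sqrt_div zero_le_one, Real.sqrt_one]

end HajekProjection

/-- `HasEnvelope P f C` expresses that the expected supremum of the random field `f` is at most
`C`. To avoid asking for measurability of a supremum over an arbitrary index type `Z`, it says
that a single integrable random variable of mean at most `C` dominates every `f z`. -/
def HasEnvelope {Ω Z : Type*} [MeasurableSpace Ω] (P : Measure Ω) (f : Z → Ω → ℝ) (C : ℝ) :
    Prop :=
  ∃ Ψ : Ω → ℝ, Integrable Ψ P ∧ (∀ z ω, f z ω ≤ Ψ ω) ∧ ∫ ω, Ψ ω ∂P ≤ C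

namespace HasEnvelope

variable {Ω Z : Type*} [MeasurableSpace Ω] {P : Measure Ω} {f g : Z → Ω → ℝ} {C C' : ℝ}

lemma mono (hg : HasEnvelope P g C) (hfg : ∀ z ω, f z ω ≤ g z ω) (hC : C ≤ C') :
    HasEnvelope P f C' := by
  obtain ⟨Ψ, integrable, bound, mean⟩ := hg
  exact ⟨Ψ, integrable, fun z ω => (hfg z ω).trans (bound z ω), mean.trans hC⟩

lemma comp {Y : Type*} (hf : HasEnvelope P f C) (τ : Y → Z) :
    HasEnvelope P (fun y => f (τ y)) C := by
  obtain ⟨Ψ, integrable, bound, mean⟩ := hf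
  exact ⟨Ψ, integrable, fun y => bound (τ y), mean⟩

lemma const [IsProbabilityMeasure P] (c : ℝ) : HasEnvelope P (fun (_ : Z) _ => c) c :=
  ⟨fun _ => c, integrable_const c, fun _ _ => le_rfl, by simp⟩

lemma add (hf : HasEnvelope P f C) (hg : HasEnvelope P g C') :
    HasEnvelope P (fun z ω => f z ω + g z ω) (C + C') := by
  obtain ⟨Ψ, hΨ, boundΨ, meanΨ⟩ := hf
  obtain ⟨Φ, hΦ, boundΦ, meanΦ⟩ := hg
  refine ⟨fun ω => Ψ ω + Φ ω, hΨ.add hΦ, fun z ω => add_le_add (boundΨ z ω) (boundΦ z ω), ?_⟩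
  exact (integral_add hΨ hΦ).trans_le (add_le_add meanΨ meanΦ)

lemma const_mul (hf : HasEnvelope P f C) {c : ℝ} (hc : 0 ≤ c) :
    HasEnvelope P (fun z ω => c * f z ω) (c * C) := by
  obtain ⟨Ψ, hΨ, bound, mean⟩ := hf
  refine ⟨fun ω => c * Ψ ω, hΨ.const_mul c, fun z ω => mul_le_mul_of_nonneg_left (bound z ω) hc, ?_⟩
  exact (integral_const_mul c Ψ).trans_le (mul_le_mul_of_nonneg_left mean hc)

lemma sum {ι : Type*} {h : ι → Z → Ω → ℝ} {c : ι → ℝ} {s : Finset ι}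
    (hh : ∀ i ∈ s, HasEnvelope P (h i) (c i)) :
    HasEnvelope P (fun z ω => ∑ i ∈ s, h i z ω) (∑ i ∈ s, c i) := by
  choose! Ψ integrable bound mean using hh
  refine ⟨fun ω => ∑ i ∈ s, Ψ i ω, integrable_finsetSum s integrable,
    fun z ω => Finset.sum_le_sum fun i hi => bound i hi z ω, ?_⟩
  exact (integral_finsetSum s integrable).trans_le (Finset.sum_le_sum mean)

lemma abs_integral_le (hf : HasEnvelope P f C) {h : Ω → ℝ} (z : Ω → Z)
    (hh : ∀ ω, |h ω| ≤ f (z ω) ω) : |∫ ω, h ω ∂P| ≤ C := by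
  obtain ⟨Ψ, hΨ, bound, mean⟩ := hf
  exact (norm_integral_le_of_norm_le hΨ
    (.of_forall fun ω => (Real.norm_eq_abs _).trans_le ((hh ω).trans (bound (z ω) ω)))).trans mean

lemma of_integral_exp_le [IsProbabilityMeasure P] {R : Finset Z} {l K : ℝ}
    (card_le : (R.card : ℝ) ≤ Real.exp l) (hR : ∀ z, ∃ r ∈ R, f z = f r)
    (integrable : ∀ r ∈ R, Integrable (fun ω => Real.exp (f r ω)) P)
    (hK : 0 ≤ K) (integral_le : ∀ r ∈ R, ∫ ω, Real.exp (f r ω) ∂P ≤ K) :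
    HasEnvelope P f (l + K) := by
  have integrable' : Integrable (fun ω => ∑ r ∈ R, Real.exp (f r ω)) P :=
    integrable_finsetSum R integrable
  refine ⟨fun ω => l + Real.exp (-l) * ∑ r ∈ R, Real.exp (f r ω),
    (integrable_const l).add (integrable'.const_mul _), fun z ω => ?_, ?_⟩
  · obtain ⟨r, hr, hzr⟩ := hR z
    calc f z ω = f r ω := congrFun hzr ω
      _ ≤ l + Real.exp (f r ω - l) := by linarith [Real.add_one_le_exp (f r ω - l)]
      _ = l + Real.exp (-l) * Real.exp (f r ω) := by rw [← Real.exp_add, neg_add_eq_sub]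
      _ ≤ l + Real.exp (-l) * ∑ r ∈ R, Real.exp (f r ω) := by
        gcongr
        exact Finset.single_le_sum (f := fun r => Real.exp (f r ω))
          (fun r _ => (Real.exp_pos _).le) hr
  · calc ∫ ω, (l + Real.exp (-l) * ∑ r ∈ R, Real.exp (f r ω)) ∂P
        = l + Real.exp (-l) * ∑ r ∈ R, ∫ ω, Real.exp (f r ω) ∂P := by
          rw [integral_add (integrable_const l) (integrable'.const_mul _), integral_const_mul,
            integral_finsetSum R integrable, integral_const, probReal_univ, one_smul]
      _ ≤ l + Real.exp (-l) * (Real.exp l * K) := by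
        gcongr
        refine (Finset.sum_le_card_nsmul R _ K integral_le).trans ?_
        rw [nsmul_eq_mul]
        gcongr
      _ = l + K := by rw [← mul_assoc, ← Real.exp_add, neg_add_cancel, Real.exp_zero, one_mul]

end HasEnvelope

section ExponentialMoments

variable {Ω : Type*} [MeasurableSpace Ω] (F : Measure Ω) (m : ℕ)

lemma integrable_exp_abs_sum_comp_eval [IsFiniteMeasure F] {g : Ω → ℝ} {C : ℝ} (hg : Measurable g)
    (hC : ∀ a, |g a| ≤ C) : Integrable (fun X => Real.exp |∑ j, g (X j)|) (iidLaw F m) := by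
  refine integrable_of_abs_le (C := Real.exp (m * C)) (by fun_prop) fun X => ?_
  rw [Real.abs_exp, Real.exp_le_exp]
  calc |∑ j, g (X j)| ≤ ∑ j, |g (X j)| := Finset.abs_sum_le_sum_abs _ _
    _ ≤ m * C := by
      simpa using Finset.sum_le_card_nsmul Finset.univ (fun j => |g (X j)|) C fun j _ => hC _

variable [IsProbabilityMeasure F]

lemma integral_exp_sum_comp_eval_le {g : Ω → ℝ} (hg : Measurable g) (hg1 : ∀ a, |g a| ≤ 1) :
    ∫ X, Real.exp (∑ j, g (X j)) ∂iidLaw F m ≤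
      Real.exp (m * (∫ a, g a ∂F + ∫ a, g a ^ 2 ∂F)) := by
  have hi : Integrable g F := integrable_of_abs_le hg hg1
  have hi2 : Integrable (fun a => g a ^ 2) F := integrable_of_abs_le (hg.pow_const 2) fun a => by
    rw [abs_pow]; exact pow_le_one₀ (abs_nonneg _) (hg1 a)
  have hi_exp : Integrable (fun a => Real.exp (g a)) F :=
    integrable_of_abs_le (C := Real.exp 1) hg.exp fun a => by
      rw [Real.abs_exp, Real.exp_le_exp]; exact (le_abs_self _).trans (hg1 a)
  have hi1 : Integrable (fun a => 1 + g a) F := (integrable_const 1).add hi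
  have one_factor : ∫ a, Real.exp (g a) ∂F ≤ Real.exp (∫ a, g a ∂F + ∫ a, g a ^ 2 ∂F) :=
    calc ∫ a, Real.exp (g a) ∂F ≤ ∫ a, (1 + g a + g a ^ 2) ∂F :=
          integral_mono hi_exp (hi1.add hi2) fun a => by
            have := (abs_le.1 (Real.abs_exp_sub_one_sub_id_le (hg1 a))).2
            dsimp only
            linarith
      _ = (∫ a, g a ∂F + ∫ a, g a ^ 2 ∂F) + 1 := by
          rw [integral_add hi1 hi2, integral_add (integrable_const 1) hi, integral_const,
            probReal_univ, one_smul]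
          ring
      _ ≤ _ := Real.add_one_le_exp _
  calc ∫ X, Real.exp (∑ j, g (X j)) ∂iidLaw F m = (∫ a, Real.exp (g a) ∂F) ^ m := by
        simp only [Real.exp_sum]
        rw [integral_fintype_prod_eq_pow (fun a => Real.exp (g a)), Fintype.card_fin]
    _ ≤ Real.exp (∫ a, g a ∂F + ∫ a, g a ^ 2 ∂F) ^ m :=
        pow_le_pow_left₀ (integral_nonneg fun a => (Real.exp_pos _).le) one_factor m
    _ = Real.exp (m * (∫ a, g a ∂F + ∫ a, g a ^ 2 ∂F)) := (Real.exp_nat_mul _ m).symm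

lemma integral_exp_abs_sum_comp_eval_le {g : Ω → ℝ} (hg : Measurable g) (hg1 : ∀ a, |g a| ≤ 1)
    (hmoments : m * (|∫ a, g a ∂F| + ∫ a, g a ^ 2 ∂F) ≤ 2) :
    ∫ X, Real.exp |∑ j, g (X j)| ∂iidLaw F m ≤ Real.exp 3 := by
  have one_side (h : Ω → ℝ) (hh : Measurable h) (hh1 : ∀ a, |h a| ≤ 1)
      (habs : |∫ a, h a ∂F| = |∫ a, g a ∂F|) (hsq : ∀ a, h a ^ 2 = g a ^ 2) :
      ∫ X, Real.exp (∑ j, h (X j)) ∂iidLaw F m ≤ Real.exp 2 := by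
    refine (integral_exp_sum_comp_eval_le F m hh hh1).trans ?_
    refine Real.exp_le_exp.2 (le_trans ?_ hmoments)
    simp only [hsq]
    gcongr
    exact (le_abs_self _).trans_eq habs
  have hint (h : Ω → ℝ) (hh : Measurable h) (hh1 : ∀ a, |h a| ≤ 1) :
      Integrable (fun X => Real.exp (∑ j, h (X j))) (iidLaw F m) :=
    (integrable_exp_abs_sum_comp_eval F m hh hh1).mono'
      (show Measurable _ by fun_prop).aestronglyMeasurable <| .of_forall fun X => by
      rw [Real.norm_eq_abs, Real.abs_exp, Real.exp_le_exp]; exact le_abs_self _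
  have hneg1 (a : Ω) : |-g a| ≤ 1 := by rw [abs_neg]; exact hg1 a
  calc ∫ X, Real.exp |∑ j, g (X j)| ∂iidLaw F m
      ≤ ∫ X, (Real.exp (∑ j, g (X j)) + Real.exp (∑ j, -g (X j))) ∂iidLaw F m := by
        refine integral_mono (integrable_exp_abs_sum_comp_eval F m hg hg1)
          ((hint g hg hg1).add (hint _ hg.neg hneg1)) fun X => ?_
        simp only [Finset.sum_neg_distrib]
        exact Real.exp_abs_le _
    _ = ∫ X, Real.exp (∑ j, g (X j)) ∂iidLaw F m + ∫ X, Real.exp (∑ j, -g (X j)) ∂iidLaw F m :=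
        integral_add (hint g hg hg1) (hint _ hg.neg hneg1)
    _ ≤ Real.exp 2 + Real.exp 2 := add_le_add
        (one_side g hg hg1 rfl fun _ => rfl)
        (one_side (-g) hg.neg hneg1
          ((congrArg _ (integral_neg g)).trans (abs_neg _))
          fun a => neg_sq _)
    _ = 2 * Real.exp 2 := (two_mul _).symm
    _ ≤ Real.exp 1 * Real.exp 2 := by gcongr; linarith [Real.add_one_le_exp 1]
    _ = Real.exp 3 := by rw [← Real.exp_add]; norm_num

lemma hasEnvelope_abs_sum_comp_eval {Z : Type*} {g : Z → Ω → ℝ} {R : Finset Z} {l : ℝ}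
    (card_le : (R.card : ℝ) ≤ Real.exp l) (hR : ∀ z, ∃ r ∈ R, g z = g r)
    (hg : ∀ z, Measurable (g z)) (hg1 : ∀ z a, |g z a| ≤ 1)
    (hmoments : ∀ z, m * (|∫ a, g z a ∂F| + ∫ a, g z a ^ 2 ∂F) ≤ 2) :
    HasEnvelope (iidLaw F m) (fun z X => |∑ j, g z (X j)|) (l + Real.exp 3) := by
  refine .of_integral_exp_le card_le (fun z => ?_)
    (fun r _ => integrable_exp_abs_sum_comp_eval F m (hg r) (hg1 r)) (Real.exp_pos 3).le
    (fun r _ => integral_exp_abs_sum_comp_eval_le F m (hg r) (hg1 r) (hmoments r))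
  obtain ⟨r, hr, hzr⟩ := hR z
  exact ⟨r, hr, by simp only [hzr]⟩

end ExponentialMoments

section Truncation

variable {M : Type*} [MeasurableSpace M] [AddCommMonoid M] [MeasurableAdd₂ M]

/-- The steps `a` for which the conditional probability of `B` given that one of the summands
equals `a` exceeds the threshold `θ`. -/
def heavy (F : Measure M) (n : ℕ) (θ : ℝ) (B : Set M) : Set M :=
  {a | θ < shiftProb (convPow F n) B a}

/-- The Hájek kernel of `V`, truncated to the steps that are not heavy for `B`. -/
noncomputable def truncHajek (F : Measure M) (n : ℕ) (θ : ℝ) (B V : Set M) : M → ℝ :=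
  (heavy F n θ B)ᶜ.indicator (hajek F n V)

variable (F : Measure M) [IsProbabilityMeasure F] (n : ℕ) {θ : ℝ} {B V : Set M}

lemma measurableSet_heavy (hB : MeasurableSet B) : MeasurableSet (heavy F n θ B) :=
  measurableSet_lt measurable_const (measurable_shiftProb _ hB)

lemma measurable_truncHajek (hB : MeasurableSet B) (hV : MeasurableSet V) :
    Measurable (truncHajek F n θ B V) :=
  (measurable_hajek F n hV).indicator (measurableSet_heavy F n hB).compl

lemma abs_hajek_le_of_notMem_heavy (hVB : V ⊆ B) (hBθ : (convPow F (n + 1)).real B ≤ θ) {a : M}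
    (ha : a ∉ heavy F n θ B) : |hajek F n V a| ≤ θ :=
  abs_sub_le_of_nonneg_of_le (shiftProb_nonneg _ V a)
    ((shiftProb_mono _ hVB a).trans (not_lt.1 ha)) measureReal_nonneg
    ((measureReal_mono hVB).trans hBθ)

lemma abs_truncHajek_le (hθ : 0 ≤ θ) (hVB : V ⊆ B) (hBθ : (convPow F (n + 1)).real B ≤ θ) (a : M) :
    |truncHajek F n θ B V a| ≤ θ := by
  by_cases ha : a ∈ heavy F n θ B
  · rwa [truncHajek, Set.indicator_of_notMem (Set.notMem_compl_iff.2 ha), abs_zero]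
  · rw [truncHajek, Set.indicator_of_mem (Set.mem_compl ha)]
    exact abs_hajek_le_of_notMem_heavy F n hVB hBθ ha

lemma measureReal_heavy_le (hθ : 0 < θ) (hB : MeasurableSet B)
    (hB1 : (convPow F (n + 1)).real B ≤ θ / 2) (hB2 : (convPow F (n + 1)).real B ≤ (θ / 2) ^ 2) :
    (n + 1) * F.real (heavy F n θ B) ≤ 1 := by
  have heavy_subset : heavy F n θ B ⊆ {a | (θ / 2) ^ 2 ≤ hajek F n B a ^ 2} := fun a ha => by
    refine pow_le_pow_left₀ (half_pos hθ).le ?_ 2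
    have : θ < shiftProb (convPow F n) B a := ha
    rw [hajek]
    linarith
  have markov : (θ / 2) ^ 2 * F.real (heavy F n θ B) ≤ ∫ a, hajek F n B a ^ 2 ∂F :=
    (mul_le_mul_of_nonneg_left (measureReal_mono heavy_subset) (by positivity)).trans
      (mul_meas_ge_le_integral_of_nonneg (f := fun a => hajek F n B a ^ 2)
        (.of_forall fun a => sq_nonneg _) (integrable_hajek_sq F n hB) _)
  have scaled : (θ / 2) ^ 2 * ((n + 1) * F.real (heavy F n θ B)) ≤ (θ / 2) ^ 2 * 1 :=
    calc (θ / 2) ^ 2 * ((n + 1) * F.real (heavy F n θ B))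
        = (n + 1) * ((θ / 2) ^ 2 * F.real (heavy F n θ B)) := by ring
      _ ≤ (n + 1) * ∫ a, hajek F n B a ^ 2 ∂F := by gcongr
      _ ≤ (convPow F (n + 1)).real B := bessel_hajek F n hB
      _ ≤ (θ / 2) ^ 2 * 1 := by rwa [mul_one]
  exact le_of_mul_le_mul_left scaled (by positivity)

lemma integral_truncHajek_sq_le (hV : MeasurableSet V)
    (hV2 : (convPow F (n + 1)).real V ≤ (θ / 2) ^ 2) :
    (n + 1) * ∫ a, truncHajek F n θ B V a ^ 2 ∂F ≤ (θ / 2) ^ 2 := by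
  have sq_le (a : M) : truncHajek F n θ B V a ^ 2 ≤ hajek F n V a ^ 2 :=
    sq_le_sq.2 (norm_indicator_le_norm_self (hajek F n V) a)
  calc (n + 1) * ∫ a, truncHajek F n θ B V a ^ 2 ∂F
      ≤ (n + 1) * ∫ a, hajek F n V a ^ 2 ∂F :=
        mul_le_mul_of_nonneg_left (integral_mono_of_nonneg (.of_forall fun a => sq_nonneg _)
          (integrable_hajek_sq F n hV) (.of_forall sq_le)) (by positivity)
    _ ≤ (convPow F (n + 1)).real V := bessel_hajek F n hV
    _ ≤ (θ / 2) ^ 2 := hV2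

lemma abs_integral_truncHajek_le_setIntegral (hB : MeasurableSet B) (hV : MeasurableSet V) :
    |∫ a, truncHajek F n θ B V a ∂F| ≤ ∫ a in heavy F n θ B, |hajek F n V a| ∂F := by
  have hH := measurableSet_heavy F n (θ := θ) hB
  have split := integral_add_compl hH (integrable_hajek F n hV)
  rw [integral_hajek F n hV] at split
  have : ∫ a, truncHajek F n θ B V a ∂F = -∫ a in heavy F n θ B, hajek F n V a ∂F := by
    simp only [truncHajek]
    rw [integral_indicator hH.compl]
    linarith
  rw [this, abs_neg]
  exact abs_integral_le_integral_abs

lemma abs_integral_truncHajek_le (hθ : 0 < θ) (hB : MeasurableSet B) (hV : MeasurableSet V)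
    (hB1 : (convPow F (n + 1)).real B ≤ θ / 2) (hB2 : (convPow F (n + 1)).real B ≤ (θ / 2) ^ 2)
    (hV2 : (convPow F (n + 1)).real V ≤ (θ / 2) ^ 2) :
    (n + 1) * |∫ a, truncHajek F n θ B V a ∂F| ≤ θ := by
  have hv2 := integrable_hajek_sq F n hV
  have am_gm (a : M) : |hajek F n V a| ≤ θ / 2 + (2 * θ)⁻¹ * hajek F n V a ^ 2 := by
    have : 0 ≤ (2 * θ)⁻¹ * (|hajek F n V a| - θ) ^ 2 := by positivity
    rw [← sq_abs (hajek F n V a)]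
    refine sub_nonneg.1 (this.trans_eq ?_)
    field_simp
    ring
  have on_heavy : ∫ a in heavy F n θ B, |hajek F n V a| ∂F ≤
      θ / 2 * F.real (heavy F n θ B) + (2 * θ)⁻¹ * ∫ a, hajek F n V a ^ 2 ∂F :=
    calc ∫ a in heavy F n θ B, |hajek F n V a| ∂F
        ≤ ∫ a in heavy F n θ B, (θ / 2 + (2 * θ)⁻¹ * hajek F n V a ^ 2) ∂F :=
          integral_mono (integrable_hajek F n hV).abs.integrableOn
            ((integrable_const _).add (hv2.const_mul _).integrableOn) am_gm
      _ = θ / 2 * F.real (heavy F n θ B) +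
            (2 * θ)⁻¹ * ∫ a in heavy F n θ B, hajek F n V a ^ 2 ∂F := by
          rw [integral_add (integrable_const _) (hv2.const_mul _).integrableOn,
            integral_const_mul, setIntegral_const, smul_eq_mul, mul_comm]
      _ ≤ _ := add_le_add le_rfl (mul_le_mul_of_nonneg_left
          (setIntegral_le_integral hv2 (.of_forall fun a => sq_nonneg _)) (by positivity))
  calc (n + 1) * |∫ a, truncHajek F n θ B V a ∂F|
      ≤ (n + 1) * (θ / 2 * F.real (heavy F n θ B) + (2 * θ)⁻¹ * ∫ a, hajek F n V a ^ 2 ∂F) := by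
        gcongr
        exact (abs_integral_truncHajek_le_setIntegral F n hB hV).trans on_heavy
    _ = θ / 2 * ((n + 1) * F.real (heavy F n θ B)) +
          (2 * θ)⁻¹ * ((n + 1) * ∫ a, hajek F n V a ^ 2 ∂F) := by ring
    _ ≤ θ / 2 * 1 + (2 * θ)⁻¹ * (θ / 2) ^ 2 := by
        gcongr
        · exact measureReal_heavy_le F n hθ hB hB1 hB2
        · exact (bessel_hajek F n hV).trans hV2
    _ = 5 / 8 * θ := by field_simp; norm_num
    _ ≤ θ := by linarith

lemma truncHajek_moments_le (hθ : 0 < θ) (hB : MeasurableSet B) (hV : MeasurableSet V)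
    (hB1 : (convPow F (n + 1)).real B ≤ θ / 2) (hB2 : (convPow F (n + 1)).real B ≤ (θ / 2) ^ 2)
    (hVB : V ⊆ B) :
    (n + 1) * (|∫ a, truncHajek F n θ B V a / θ ∂F| +
      ∫ a, (truncHajek F n θ B V a / θ) ^ 2 ∂F) ≤ 2 := by
  have hV2 : (convPow F (n + 1)).real V ≤ (θ / 2) ^ 2 := (measureReal_mono hVB).trans hB2
  have first := abs_integral_truncHajek_le F n hθ hB hV hB1 hB2 hV2
  have second := integral_truncHajek_sq_le F n (B := B) hV hV2
  simp only [div_pow, integral_div, abs_div, abs_of_pos hθ]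
  calc (n + 1) * (|∫ a, truncHajek F n θ B V a ∂F| / θ +
        (∫ a, truncHajek F n θ B V a ^ 2 ∂F) / θ ^ 2)
      = ((n + 1) * |∫ a, truncHajek F n θ B V a ∂F|) / θ +
          ((n + 1) * ∫ a, truncHajek F n θ B V a ^ 2 ∂F) / θ ^ 2 := by ring
    _ ≤ θ / θ + (θ / 2) ^ 2 / θ ^ 2 := by gcongr
    _ ≤ 2 := by field_simp; norm_num

lemma heavy_indicator_moments_le (hθ : 0 < θ) (hB : MeasurableSet B)
    (hB1 : (convPow F (n + 1)).real B ≤ θ / 2) (hB2 : (convPow F (n + 1)).real B ≤ (θ / 2) ^ 2) :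
    (n + 1) * (|∫ a, (heavy F n θ B).indicator 1 a ∂F| +
      ∫ a, (heavy F n θ B).indicator (1 : M → ℝ) a ^ 2 ∂F) ≤ 2 := by
  simp only [indicator_one_sq]
  rw [integral_indicator_one (measurableSet_heavy F n hB), abs_of_nonneg measureReal_nonneg]
  linarith [measureReal_heavy_le F n hθ hB hB1 hB2]

end Truncation

section Chaining

lemma sub_sum_one_sub_mul_eq {u e : ℕ → ℝ} (he0 : e 0 = 0) (K : ℕ) :
    u 0 - ∑ k ∈ Finset.range K, (1 - e k) * (u k - u (k + 1)) =
      (1 - e K) * u K + ∑ k ∈ Finset.range K, (e (k + 1) - e k) * u (k + 1) := by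
  induction K with
  | zero => simp [he0]
  | succ K ih =>
    rw [Finset.sum_range_succ, Finset.sum_range_succ]
    linear_combination ih

/-- Between two consecutive levels only a change of `e` contributes, and there one of the two levels
controls `u`. -/
lemma abs_sub_sum_one_sub_mul_le {u e θ : ℕ → ℝ} (he0 : e 0 = 0) (he : ∀ k, e k = 0 ∨ e k = 1)
    (hθ0 : ∀ k, 0 ≤ θ k) (hθ : Antitone θ)
    (hu : ∀ k, e k = 0 → |u k| ≤ θ k) (hu' : ∀ k, e k = 0 → |u (k + 1)| ≤ θ k) (K : ℕ) :
    |u 0 - ∑ k ∈ Finset.range K, (1 - e k) * (u k - u (k + 1))| ≤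
      ∑ k ∈ Finset.range K, θ k * (e k + e (k + 1)) + θ K := by
  have last : |(1 - e K) * u K| ≤ θ K := by
    rcases he K with h | h <;> simp [h, hu, hθ0]
  have jump (k : ℕ) : |(e (k + 1) - e k) * u (k + 1)| ≤ θ k * (e k + e (k + 1)) := by
    have hθk := hθ0 k
    rcases he k with h | h <;> rcases he (k + 1) with h' | h'
    · simp [h, h']
    · simpa [h, h'] using hu' k h
    · simpa [h, h'] using (hu (k + 1) h').trans (hθ k.le_succ)
    · simpa [h, h'] using hθk
  rw [sub_sum_one_sub_mul_eq he0, add_comm]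
  refine (abs_add_le _ _).trans (add_le_add ?_ last)
  exact (Finset.abs_sum_le_sum_abs _ _).trans (Finset.sum_le_sum fun k _ => jump k)

lemma sum_range_succ_div_two_pow_le (K : ℕ) :
    ∑ k ∈ Finset.range K, ((k : ℝ) + 1) / 2 ^ k ≤ 4 := by
  have closed_form : ∑ k ∈ Finset.range K, ((k : ℝ) + 1) / 2 ^ k = 4 - (2 * K + 4) / 2 ^ K := by
    induction K with
    | zero => norm_num
    | succ K ih =>
      rw [Finset.sum_range_succ, ih]
      field_simp
      push_cast
      ring
  rw [closed_form]
  exact sub_le_self _ (by positivity)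

/-- Nested approximations of the sets `Q z` from inside by `A k z`, with error sets `B k z` of
`μ`-measure at most `D / 4 ^ k`, such that the first `k` levels of the approximation take at most
`exp (L * k)` values as `z` varies. This is the entropy condition under which a supremum over
`z` can be controlled by chaining. -/
structure IsChaining {M Z : Type*} [MeasurableSpace M] (μ : Measure M) (D L : ℝ) (Q : Z → Set M)
    (A B : ℕ → Z → Set M) : Prop where
  one_le_errorConst : 1 ≤ D
  entropy_nonneg : 0 ≤ L
  measurableSet_inner (k : ℕ) (z : Z) : MeasurableSet (A k z)
  measurableSet_error (k : ℕ) (z : Z) : MeasurableSet (B k z)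
  inner_zero (z : Z) : A 0 z = ∅
  inner_subset_succ (k : ℕ) (z : Z) : A k z ⊆ A (k + 1) z
  inner_subset (k : ℕ) (z : Z) : A k z ⊆ Q z
  sdiff_inner_subset (k : ℕ) (z : Z) : Q z \ A k z ⊆ B k z
  measure_error_le (k : ℕ) (z : Z) : μ.real (B k z) ≤ D / 4 ^ k
  exists_finset_classes (k : ℕ) : ∃ R : Finset Z, (R.card : ℝ) ≤ Real.exp (L * k) ∧
    ∀ z, ∃ r ∈ R, ∀ j ≤ k, A j z = A j r ∧ B j z = B j r

/-- The truncation level for the Hájek kernels at the `k`-th stage of a chaining with constant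
`D`. -/
noncomputable def chainLevel (D : ℝ) (k : ℕ) : ℝ := 2 * D / 2 ^ k

lemma chainLevel_pos {D : ℝ} (hD : 0 < D) (k : ℕ) : 0 < chainLevel D k :=
  div_pos (by linarith) (by positivity)

lemma chainLevel_antitone {D : ℝ} (hD : 0 ≤ D) : Antitone (chainLevel D) := fun _ _ hij =>
  div_le_div_of_nonneg_left (by linarith) (by positivity) (pow_le_pow_right₀ one_le_two hij)

section Levels

variable {M Z : Type*} [MeasurableSpace M] [AddCommMonoid M]

/-- The heavy steps at the `k`-th level of a chaining. -/
def chainHeavy (F : Measure M) (n : ℕ) (D : ℝ) (B : ℕ → Z → Set M) (k : ℕ) (z : Z) : Set M :=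
  heavy F n (chainLevel D k) (B k z)

/-- The truncated Hájek kernel of the increment `A (k + 1) z \ A k z` of a chaining. -/
noncomputable def chainTrunc (F : Measure M) (n : ℕ) (D : ℝ) (A B : ℕ → Z → Set M) (k : ℕ) (z : Z) :
    M → ℝ :=
  truncHajek F n (chainLevel D k) (B k z) (A (k + 1) z \ A k z)

end Levels

namespace IsChaining

variable {M Z : Type*} [MeasurableSpace M] {μ : Measure M} {D L : ℝ} {Q : Z → Set M}
  {A B : ℕ → Z → Set M}

lemma level_pos (h : IsChaining μ D L Q A B) (k : ℕ) : 0 < chainLevel D k :=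
  chainLevel_pos (zero_lt_one.trans_le h.one_le_errorConst) k

lemma sdiff_succ_subset (h : IsChaining μ D L Q A B) (k : ℕ) (z : Z) :
    A (k + 1) z \ A k z ⊆ B k z :=
  (Set.sdiff_subset_sdiff_left (h.inner_subset (k + 1) z)).trans (h.sdiff_inner_subset k z)

lemma measure_error_le_half (h : IsChaining μ D L Q A B) (k : ℕ) (z : Z) :
    μ.real (B k z) ≤ chainLevel D k / 2 := by
  have hD := h.one_le_errorConst
  calc μ.real (B k z) ≤ D / 4 ^ k := h.measure_error_le k z
    _ ≤ D / 2 ^ k := by gcongr; norm_num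
    _ = chainLevel D k / 2 := by rw [chainLevel]; ring

lemma measure_error_le_sq (h : IsChaining μ D L Q A B) (k : ℕ) (z : Z) :
    μ.real (B k z) ≤ (chainLevel D k / 2) ^ 2 := by
  have hD := h.one_le_errorConst
  calc μ.real (B k z) ≤ D / 4 ^ k := h.measure_error_le k z
    _ ≤ D ^ 2 / 4 ^ k := by gcongr; exact le_self_pow₀ hD two_ne_zero
    _ = (D / 2 ^ k) ^ 2 := by rw [div_pow, ← pow_mul, mul_comm k, pow_mul]; norm_num
    _ = (chainLevel D k / 2) ^ 2 := by rw [chainLevel]; ring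

lemma sum_chainLevel_mul_le (h : IsChaining μ D L Q A B) (K : ℕ) :
    ∑ k ∈ Finset.range K, (chainLevel D k * (L * (k + 1) + Real.exp 3) + chainLevel D k *
      (L * k + Real.exp 3 + (L * (k + 1 : ℕ) + Real.exp 3))) ≤ 24 * D * (L + Real.exp 3) := by
  have hL := h.entropy_nonneg
  have hD : 0 ≤ D := zero_le_one.trans h.one_le_errorConst
  have level_le (k : ℕ) : chainLevel D k * (L * (k + 1) + Real.exp 3) + chainLevel D k *
      (L * k + Real.exp 3 + (L * (k + 1 : ℕ) + Real.exp 3)) ≤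
      6 * D * (L + Real.exp 3) * ((k + 1) / 2 ^ k) := by
    have : 3 * (k + 1) * (L + Real.exp 3) -
        (L * (k + 1) + Real.exp 3 + (L * k + Real.exp 3 + (L * (k + 1) + Real.exp 3))) =
        L + 3 * k * Real.exp 3 := by ring
    have count_le : L * (k + 1) + Real.exp 3 + (L * k + Real.exp 3 + (L * (k + 1) + Real.exp 3)) ≤
        3 * (k + 1) * (L + Real.exp 3) := sub_nonneg.1 (this ▸ by positivity)
    calc _ = chainLevel D k * (L * (k + 1) + Real.exp 3 +
            (L * k + Real.exp 3 + (L * (k + 1) + Real.exp 3))) := by push_cast; ring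
      _ ≤ chainLevel D k * (3 * (k + 1) * (L + Real.exp 3)) :=
          mul_le_mul_of_nonneg_left count_le (h.level_pos k).le
      _ = _ := by rw [chainLevel]; ring
  calc _ ≤ ∑ k ∈ Finset.range K, 6 * D * (L + Real.exp 3) * (((k : ℝ) + 1) / 2 ^ k) :=
        Finset.sum_le_sum fun k _ => level_le k
    _ ≤ 6 * D * (L + Real.exp 3) * 4 := by
        rw [← Finset.mul_sum]
        exact mul_le_mul_of_nonneg_left (sum_range_succ_div_two_pow_le K) (by positivity)
    _ = 24 * D * (L + Real.exp 3) := by ring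

variable [AddCommMonoid M] [MeasurableAdd₂ M] {F : Measure M} [IsProbabilityMeasure F] {n : ℕ}

lemma chainHeavy_zero (h : IsChaining (convPow F (n + 1)) D L Q A B) (z : Z) :
    chainHeavy F n D B 0 z = ∅ := by
  refine Set.eq_empty_of_forall_notMem fun a (ha : chainLevel D 0 < _) => ?_
  have : chainLevel D 0 = 2 * D := by simp [chainLevel]
  linarith [shiftProb_le_one (convPow F n) (B 0 z) a, h.one_le_errorConst]

lemma abs_hajek_sub_sum_chainTrunc_le (h : IsChaining (convPow F (n + 1)) D L Q A B) (z : Z)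
    (a : M) (K : ℕ) :
    |hajek F n (Q z) a - ∑ k ∈ Finset.range K, chainTrunc F n D A B k z a| ≤
      ∑ k ∈ Finset.range K, chainLevel D k *
        ((chainHeavy F n D B k z).indicator 1 a + (chainHeavy F n D B (k + 1) z).indicator 1 a) +
        chainLevel D K := by
  let u (k : ℕ) : ℝ := hajek F n (Q z \ A k z) a
  let e (k : ℕ) : ℝ := (chainHeavy F n D B k z).indicator 1 a
  have notHeavy {k : ℕ} (hk : e k = 0) : a ∉ heavy F n (chainLevel D k) (B k z) := fun ha => by
    simp [e, chainHeavy, ha] at hk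
  have error_le (k : ℕ) : (convPow F (n + 1)).real (B k z) ≤ chainLevel D k :=
    (h.measure_error_le_half k z).trans (half_le_self (h.level_pos k).le)
  have u_sub (k : ℕ) : u k - u (k + 1) = hajek F n (A (k + 1) z \ A k z) a := by
    simp only [u, hajek_sdiff F n (h.inner_subset _ z) (h.measurableSet_inner _ z),
      hajek_sdiff F n (h.inner_subset_succ k z) (h.measurableSet_inner k z)]
    ring
  have trunc_eq (k : ℕ) : chainTrunc F n D A B k z a = (1 - e k) * (u k - u (k + 1)) := by
    rw [u_sub, chainTrunc, truncHajek, Set.indicator_compl]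
    by_cases ha : a ∈ heavy F n (chainLevel D k) (B k z) <;> simp [e, chainHeavy, ha]
  have u_zero : u 0 = hajek F n (Q z) a := by simp only [u, h.inner_zero, Set.sdiff_empty]
  simp only [trunc_eq, ← u_zero]
  exact abs_sub_sum_one_sub_mul_le (by simp [h.chainHeavy_zero])
    (fun k => Set.indicator_eq_zero_or_self _ 1 a) (fun k => (h.level_pos k).le)
    (chainLevel_antitone (zero_le_one.trans h.one_le_errorConst))
    (fun k hk => abs_hajek_le_of_notMem_heavy F n (h.sdiff_inner_subset k z) (error_le k)
      (notHeavy hk))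
    (fun k hk => abs_hajek_le_of_notMem_heavy F n
      ((Set.sdiff_subset_sdiff_right (h.inner_subset_succ k z)).trans (h.sdiff_inner_subset k z))
      (error_le k) (notHeavy hk)) K

lemma abs_sum_hajek_le (h : IsChaining (convPow F (n + 1)) D L Q A B) (z : Z)
    (X : Fin (n + 1) → M) (K : ℕ) :
    |∑ j, hajek F n (Q z) (X j)| ≤
      ∑ k ∈ Finset.range K, (|∑ j, chainTrunc F n D A B k z (X j)| + chainLevel D k *
        (|∑ j, (chainHeavy F n D B k z).indicator 1 (X j)| +
          |∑ j, (chainHeavy F n D B (k + 1) z).indicator 1 (X j)|)) +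
        (n + 1) * chainLevel D K := by
  let e (k : ℕ) (a : M) : ℝ := (chainHeavy F n D B k z).indicator 1 a
  have remainder : |∑ j, hajek F n (Q z) (X j) -
      ∑ k ∈ Finset.range K, ∑ j, chainTrunc F n D A B k z (X j)| ≤
      ∑ k ∈ Finset.range K, chainLevel D k * (∑ j, e k (X j) + ∑ j, e (k + 1) (X j)) +
        (n + 1) * chainLevel D K :=
    calc _ = |∑ j, (hajek F n (Q z) (X j) -
            ∑ k ∈ Finset.range K, chainTrunc F n D A B k z (X j))| := by
          rw [Finset.sum_sub_distrib, Finset.sum_comm]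
      _ ≤ ∑ j, (∑ k ∈ Finset.range K, chainLevel D k * (e k (X j) + e (k + 1) (X j)) +
            chainLevel D K) :=
          (Finset.abs_sum_le_sum_abs _ _).trans
            (Finset.sum_le_sum fun j _ => h.abs_hajek_sub_sum_chainTrunc_le z (X j) K)
      _ = _ := by
          rw [Finset.sum_add_distrib, Finset.sum_comm]
          simp [← Finset.mul_sum, Finset.sum_add_distrib]
  rw [Finset.sum_add_distrib, add_assoc]
  refine (sub_le_iff_le_add'.1 (abs_sub_abs_le_abs_sub _ _)).trans
    (add_le_add (Finset.abs_sum_le_sum_abs _ _) (remainder.trans (add_le_add_left ?_ _)))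
  refine Finset.sum_le_sum fun k _ => mul_le_mul_of_nonneg_left ?_ (h.level_pos k).le
  exact add_le_add (le_abs_self _) (le_abs_self _)

lemma hasEnvelope_chainTrunc (h : IsChaining (convPow F (n + 1)) D L Q A B) (k : ℕ) :
    HasEnvelope (iidLaw F (n + 1)) (fun z X => |∑ j, chainTrunc F n D A B k z (X j)|)
      (chainLevel D k * (L * (k + 1) + Real.exp 3)) := by
  have hθ := h.level_pos k
  have hV (z : Z) : MeasurableSet (A (k + 1) z \ A k z) :=
    (h.measurableSet_inner (k + 1) z).diff (h.measurableSet_inner k z)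
  obtain ⟨R, card_le, hR⟩ := h.exists_finset_classes (k + 1)
  have normalized := hasEnvelope_abs_sum_comp_eval F (n + 1)
    (g := fun z a => chainTrunc F n D A B k z a / chainLevel D k) card_le
    (fun z => by
      obtain ⟨r, hr, eq⟩ := hR z
      refine ⟨r, hr, ?_⟩
      simp only [chainTrunc, eq k k.le_succ, eq (k + 1) le_rfl])
    (fun z => (measurable_truncHajek F n (h.measurableSet_error k z) (hV z)).div_const _)
    (fun z a => by
      rw [abs_div, abs_of_pos hθ, div_le_one hθ]
      exact abs_truncHajek_le F n hθ.le (h.sdiff_succ_subset k z)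
        ((h.measure_error_le_half k z).trans (half_le_self hθ.le)) a)
    (fun z => by
      push_cast
      exact truncHajek_moments_le F n hθ (h.measurableSet_error k z) (hV z)
        (h.measure_error_le_half k z) (h.measure_error_le_sq k z) (h.sdiff_succ_subset k z))
  refine (normalized.const_mul hθ.le).mono (fun z X => le_of_eq ?_) (by push_cast; rfl)
  rw [← Finset.sum_div, abs_div, abs_of_pos hθ, mul_div_cancel₀ _ hθ.ne']

lemma hasEnvelope_chainHeavy (h : IsChaining (convPow F (n + 1)) D L Q A B) (k : ℕ) :
    HasEnvelope (iidLaw F (n + 1))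
      (fun z X => |∑ j, (chainHeavy F n D B k z).indicator (1 : M → ℝ) (X j)|)
      (L * k + Real.exp 3) := by
  obtain ⟨R, card_le, hR⟩ := h.exists_finset_classes k
  refine hasEnvelope_abs_sum_comp_eval F (n + 1) card_le (fun z => ?_)
    (fun z => measurable_one.indicator (measurableSet_heavy F n (h.measurableSet_error k z)))
    (fun z a => (norm_indicator_le_norm_self (1 : M → ℝ) a).trans_eq norm_one) (fun z => ?_)
  · obtain ⟨r, hr, eq⟩ := hR z
    refine ⟨r, hr, ?_⟩
    simp only [chainHeavy, eq k le_rfl]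
  · push_cast
    exact heavy_indicator_moments_le F n (h.level_pos k) (h.measurableSet_error k z)
      (h.measure_error_le_half k z) (h.measure_error_le_sq k z)

theorem hasEnvelope_abs_sum_hajek (h : IsChaining (convPow F (n + 1)) D L Q A B) :
    HasEnvelope (iidLaw F (n + 1)) (fun z X => |∑ j, hajek F n (Q z) (X j)|)
      (24 * D * (L + Real.exp 3) + 1) := by
  obtain ⟨K, hK⟩ : ∃ K : ℕ, (n + 1) * chainLevel D K ≤ 1 := by
    obtain ⟨K, hK⟩ := pow_unbounded_of_one_lt ((n + 1) * (2 * D)) one_lt_two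
    exact ⟨K, by rw [chainLevel, ← mul_div_assoc, div_le_one (by positivity)]; exact hK.le⟩
  have levels : HasEnvelope (iidLaw F (n + 1)) _ _ :=
    (HasEnvelope.sum (s := Finset.range K) fun k _ => (h.hasEnvelope_chainTrunc k).add
      (((h.hasEnvelope_chainHeavy k).add (h.hasEnvelope_chainHeavy (k + 1))).const_mul
        (h.level_pos k).le)).add (.const ((n + 1) * chainLevel D K))
  exact levels.mono (fun z X => h.abs_sum_hajek_le z X K)
    (add_le_add (h.sum_chainLevel_mul_le K) hK)

end IsChaining

end Chaining

section TwoStepIdentity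

variable {E : Type*} [MeasurableSpace E] [AddCommGroup E] (F : Measure E) (n : ℕ)

lemma hajek_preimage_sub (A : Set E) (u a : E) :
    hajek F n ((· - u) ⁻¹' A) a =
      shiftProb (convPow F n) A (a - u) - shiftProb (convPow F (n + 1)) A (-u) := by
  simp only [hajek, shiftProb, ← Set.preimage_comp, Function.comp_def, sub_eq_add_neg,
    add_assoc]

variable [MeasurableAdd₂ E] [MeasurableNeg E] [IsProbabilityMeasure F] [F.IsNegInvariant]
  {A : Set E}

lemma integral_shiftProb_neg (hA : MeasurableSet A) :
    ∫ s, shiftProb (convPow F n) A (-s) ∂convPow F n = (convPow F (2 * n)).real A := by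
  rw [integral_neg_eq_self (shiftProb (convPow F n) A), integral_shiftProb _ _ hA, ← convPow_add,
    two_mul]

/-- The sum of all the steps other than `X j` is `∑ i, X i - X j`, and by symmetry its negative is
an independent copy of an `n`-step sum. -/
lemma integral_hajek_preimage_sub_sum (hA : MeasurableSet A) (j : Fin (n + 1)) :
    ∫ X, hajek F n ((· - ∑ i, X i) ⁻¹' A) (X j) ∂iidLaw F (n + 1) =
      (convPow F (2 * n)).real A - (convPow F (2 * (n + 1))).real A := by
  have hn := measurable_shiftProb (convPow F n) hA
  have hn' := measurable_shiftProb (convPow F (n + 1)) hA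
  have others : ∫ X, shiftProb (convPow F n) A (X j - ∑ i, X i) ∂iidLaw F (n + 1) =
      (convPow F (2 * n)).real A := by
    rw [integral_comp_eval_sum_iidLaw F n j (φ := fun a u => shiftProb (convPow F n) A (a - u))
      (by fun_prop)]
    simp only [sub_add_cancel_left]
    rw [integral_fun_snd fun s => shiftProb (convPow F n) A (-s), probReal_univ, one_smul,
      integral_shiftProb_neg F n hA]
  have all : ∫ X, shiftProb (convPow F (n + 1)) A (-∑ i, X i) ∂iidLaw F (n + 1) =
      (convPow F (2 * (n + 1))).real A := by
    rw [integral_comp_sum_iidLaw F (n + 1) (φ := fun s => shiftProb (convPow F (n + 1)) A (-s))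
      (by fun_prop), integral_shiftProb_neg F (n + 1) hA]
  simp only [hajek_preimage_sub]
  rw [integral_sub (integrable_of_abs_le (C := 1) (by fun_prop) fun X => ?_)
    (integrable_of_abs_le (C := 1) (by fun_prop) fun X => ?_), others, all] <;>
  · rw [abs_of_nonneg (shiftProb_nonneg _ _ _)]
    exact shiftProb_le_one _ _ _

lemma HasEnvelope.abs_convPow_sub_le (hA : MeasurableSet A) {C : ℝ}
    (h : HasEnvelope (iidLaw F (n + 1)) (fun u X => |∑ j, hajek F n ((· - u) ⁻¹' A) (X j)|) C) :
    (n + 1) * |(convPow F (2 * n)).real A - (convPow F (2 * (n + 1))).real A| ≤ C := by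
  have hn := measurable_shiftProb (convPow F n) hA
  have hn' := measurable_shiftProb (convPow F (n + 1)) hA
  have integrable (j : Fin (n + 1)) :
      Integrable (fun X => hajek F n ((· - ∑ i, X i) ⁻¹' A) (X j)) (iidLaw F (n + 1)) :=
    integrable_of_abs_le (by simp only [hajek_preimage_sub]; fun_prop)
      fun X => abs_hajek_le_one F n _ _
  have sum_eq : ∫ X, ∑ j, hajek F n ((· - ∑ i, X i) ⁻¹' A) (X j) ∂iidLaw F (n + 1) =
      (n + 1) * ((convPow F (2 * n)).real A - (convPow F (2 * (n + 1))).real A) := by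
    rw [integral_finsetSum _ fun j _ => integrable j]
    simp only [integral_hajek_preimage_sub_sum F n hA, Finset.sum_const, Finset.card_univ,
      Fintype.card_fin, nsmul_eq_mul, Nat.cast_add_one]
  rw [← abs_of_pos (Nat.cast_add_one_pos n : (0 : ℝ) < n + 1), ← abs_mul, ← sum_eq]
  exact h.abs_integral_le (fun X => ∑ i, X i) fun X => le_rfl

end TwoStepIdentity

section QuadrantChaining

lemma monotone_measureReal_Iio (ρ : Measure ℝ) [IsFiniteMeasure ρ] :
    Monotone fun t => ρ.real (Set.Iio t) :=
  fun _ _ h => measureReal_mono (Set.Iio_subset_Iio h)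

lemma monotone_measureReal_Iic (ρ : Measure ℝ) [IsFiniteMeasure ρ] :
    Monotone fun t => ρ.real (Set.Iic t) :=
  fun _ _ h => measureReal_mono (Set.Iic_subset_Iic.2 h)

lemma measurableSet_setOf_le_Iio_Iic (ρ : Measure ℝ) [IsFiniteMeasure ρ] (a b : ℝ) :
    MeasurableSet {t | a ≤ ρ.real (Set.Iio t) ∧ ρ.real (Set.Iic t) ≤ b} :=
  (measurableSet_le measurable_const (monotone_measureReal_Iio ρ).measurable).inter
    (measurableSet_le (monotone_measureReal_Iic ρ).measurable measurable_const)

lemma measureReal_setOf_le_Iio_Iic_le (ρ : Measure ℝ) [IsFiniteMeasure ρ] {a b : ℝ}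
    (hab : a ≤ b) :
    ρ.real {t | a ≤ ρ.real (Set.Iio t) ∧ ρ.real (Set.Iic t) ≤ b} ≤ b - a := by
  by_contra! hlt
  obtain ⟨K, hKS, hK, hbK⟩ := (measurableSet_setOf_le_Iio_Iic ρ a b).exists_lt_isCompact_of_ne_top
    (measure_ne_top ρ _)
    ((ENNReal.ofReal_lt_iff_lt_toReal (sub_nonneg.2 hab) (measure_ne_top ρ _)).2 hlt)
  have hne : K.Nonempty := nonempty_of_measure_ne_zero (zero_le.trans_lt hbK).ne'
  obtain ⟨s, hsK, hs⟩ := hK.exists_isLeast hne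
  obtain ⟨t, htK, ht⟩ := hK.exists_isGreatest hne
  have K_subset : K ⊆ Set.Iic t \ Set.Iio s := fun r hr => ⟨ht hr, not_lt.2 (hs hr)⟩
  have measure_K_le : ρ.real K ≤ b - a :=
    calc ρ.real K ≤ ρ.real (Set.Iic t \ Set.Iio s) := measureReal_mono K_subset
      _ = ρ.real (Set.Iic t) - ρ.real (Set.Iio s) :=
        measureReal_sdiff ((Set.Iio_subset_Iio (hs htK)).trans Set.Iio_subset_Iic_self)
          measurableSet_Iio
      _ ≤ b - a := sub_le_sub (hKS htK).2 (hKS hsK).1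
  exact (ENNReal.ofReal_lt_iff_lt_toReal (sub_nonneg.2 hab) (measure_ne_top ρ _)).1 hbK
    |>.not_ge measure_K_le

/-- The index `m` of the cell `(m / 4 ^ k, (m + 1) / 4 ^ k]` that contains `u > 0`. The truncated
subtraction attributes `u = 0` to the cell with index `0`. -/
noncomputable def gridCell (k : ℕ) (u : ℝ) : ℕ := ⌈4 ^ k * u⌉₊ - 1

lemma le_gridCell_add_one_div (k : ℕ) (u : ℝ) : u ≤ (gridCell k u + 1) / 4 ^ k := by
  have : ⌈4 ^ k * u⌉₊ ≤ gridCell k u + 1 := le_tsub_add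
  rw [le_div_iff₀' (by positivity)]
  exact (Nat.le_ceil _).trans (by exact_mod_cast this)

lemma gridCell_div_lt {k : ℕ} {u : ℝ} (h : 0 < gridCell k u) : gridCell k u / 4 ^ k < u := by
  rw [div_lt_iff₀' (by positivity)]
  exact Nat.lt_ceil.1 (Nat.sub_one_lt_of_lt (Nat.pos_of_ne_zero fun h0 => by
    simp [gridCell, h0] at h))

lemma gridCell_lt_four_pow (k : ℕ) {u : ℝ} (hu : u ≤ 1) : gridCell k u < 4 ^ k := by
  have : ⌈4 ^ k * u⌉₊ ≤ 4 ^ k := Nat.ceil_le.2 (by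
    push_cast
    exact mul_le_of_le_one_right (by positivity) hu)
  have : 0 < 4 ^ k := by positivity
  rw [gridCell]
  omega

lemma gridCell_succ_div_four (k : ℕ) (u : ℝ) : gridCell (k + 1) u / 4 = gridCell k u := by
  have upper : ⌈4 ^ (k + 1) * u⌉₊ ≤ 4 * ⌈4 ^ k * u⌉₊ := Nat.ceil_le.2 (by
    push_cast
    rw [pow_succ', mul_assoc]
    gcongr
    exact Nat.le_ceil _)
  have lower (h : 0 < ⌈4 ^ k * u⌉₊) : 4 * (⌈4 ^ k * u⌉₊ - 1) < ⌈4 ^ (k + 1) * u⌉₊ :=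
    Nat.lt_ceil.2 (by
      push_cast
      rw [pow_succ', mul_assoc]
      gcongr
      exact Nat.lt_ceil.1 (Nat.sub_one_lt_of_lt h))
  simp only [gridCell]
  omega

lemma gridCell_eq_of_le {j k : ℕ} (hjk : j ≤ k) {u v : ℝ} (h : gridCell k u = gridCell k v) :
    gridCell j u = gridCell j v := by
  induction hjk using Nat.decreasingInduction with
  | self => exact h
  | of_succ i _ ih => rw [← gridCell_succ_div_four, ih, gridCell_succ_div_four]

variable {ι M : Type*} [MeasurableSpace M] (μ : Measure M) (X : ι → M → ℝ)

/-- The quadrant cut out by `z` from the random vector `X`. -/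
def quadrant (z : ι → ℝ) : Set M := {y | ∀ c, X c y ≤ z c}

/-- The grid cells at scale `4 ^ (-k)` of the marginal probabilities `μ {X c ≤ z c}`. -/
noncomputable def quadrantCell (k : ℕ) (z : ι → ℝ) (c : ι) : ℕ :=
  gridCell k ((μ.map (X c)).real (Set.Iic (z c)))

/-- The approximation from inside of `quadrant X z`, determined by `quadrantCell μ X k z`. -/
def innerQuadrant (k : ℕ) (z : ι → ℝ) : Set M :=
  {y | ∀ c, (μ.map (X c)).real (Set.Iio (X c y)) < quadrantCell μ X k z c / 4 ^ k}

/-- A set containing the error `quadrant X z \ innerQuadrant μ X k z` and still determined by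
`quadrantCell μ X k z`. The strict and non-strict distribution functions both occur because the
marginals may have atoms. -/
def quadrantError (k : ℕ) (z : ι → ℝ) : Set M :=
  {y | ∃ c, quadrantCell μ X k z c / 4 ^ k ≤ (μ.map (X c)).real (Set.Iio (X c y)) ∧
    (μ.map (X c)).real (Set.Iic (X c y)) ≤ (quadrantCell μ X k z c + 1) / 4 ^ k}

variable {μ X}

lemma measurableSet_quadrant [Countable ι] (hX : ∀ c, Measurable (X c)) (z : ι → ℝ) :
    MeasurableSet (quadrant X z) := by
  rw [quadrant, Set.ofPred_forall]
  exact .iInter fun c => measurableSet_le (hX c) measurable_const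

lemma quadrantCell_eq_of_le {j k : ℕ} (hjk : j ≤ k) {w z : ι → ℝ}
    (h : quadrantCell μ X k w = quadrantCell μ X k z) :
    quadrantCell μ X j w = quadrantCell μ X j z :=
  funext fun c => gridCell_eq_of_le hjk (congrFun h c)

lemma innerQuadrant_subset_succ (k : ℕ) (z : ι → ℝ) :
    innerQuadrant μ X k z ⊆ innerQuadrant μ X (k + 1) z := fun y hy c => by
  refine (hy c).trans_le ?_
  have : 4 * quadrantCell μ X k z c ≤ quadrantCell μ X (k + 1) z c := by
    have := gridCell_succ_div_four k ((μ.map (X c)).real (Set.Iic (z c)))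
    simp only [quadrantCell]
    omega
  rw [pow_succ', ← mul_div_mul_left _ _ (four_ne_zero' ℝ)]
  gcongr
  exact_mod_cast this

section FiniteMeasure

variable [IsFiniteMeasure μ]

lemma innerQuadrant_subset (k : ℕ) (z : ι → ℝ) : innerQuadrant μ X k z ⊆ quadrant X z :=
  fun y hy c => by
  by_contra! hlt
  have cell_pos : 0 < quadrantCell μ X k z c := by
    by_contra! h0
    have := measureReal_nonneg.trans_lt (hy c)
    simp [Nat.le_zero.1 h0] at this
  have := (hy c).trans (gridCell_div_lt cell_pos)
  exact this.not_ge (measureReal_mono (Set.Iic_subset_Iio.2 hlt))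

lemma quadrant_sdiff_innerQuadrant_subset (k : ℕ) (z : ι → ℝ) :
    quadrant X z \ innerQuadrant μ X k z ⊆ quadrantError μ X k z := fun y hy => by
  obtain ⟨c, hc⟩ : ∃ c, quadrantCell μ X k z c / 4 ^ k ≤
      (μ.map (X c)).real (Set.Iio (X c y)) := by
    simpa [innerQuadrant] using hy.2
  refine ⟨c, hc, ?_⟩
  exact (monotone_measureReal_Iic _ (hy.1 c)).trans (le_gridCell_add_one_div k _)

lemma measurableSet_innerQuadrant [Countable ι] (hX : ∀ c, Measurable (X c)) (k : ℕ) (z : ι → ℝ) :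
    MeasurableSet (innerQuadrant μ X k z) := by
  rw [innerQuadrant, Set.ofPred_forall]
  exact .iInter fun c =>
    measurableSet_lt ((monotone_measureReal_Iio _).measurable.comp (hX c)) measurable_const

lemma measurableSet_quadrantError [Countable ι] (hX : ∀ c, Measurable (X c)) (k : ℕ) (z : ι → ℝ) :
    MeasurableSet (quadrantError μ X k z) := by
  rw [quadrantError, Set.ofPred_exists]
  exact .iUnion fun c => hX c (measurableSet_setOf_le_Iio_Iic _ _ _)

lemma measureReal_quadrantError_le [Fintype ι] (hX : ∀ c, Measurable (X c)) (k : ℕ) (z : ι → ℝ) :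
    μ.real (quadrantError μ X k z) ≤ Fintype.card ι / 4 ^ k := by
  let strip (c : ι) : Set ℝ :=
    {t | quadrantCell μ X k z c / 4 ^ k ≤ (μ.map (X c)).real (Set.Iio t) ∧
      (μ.map (X c)).real (Set.Iic t) ≤ (quadrantCell μ X k z c + 1) / 4 ^ k}
  have strip_le (c : ι) : μ.real (X c ⁻¹' strip c) ≤ 1 / 4 ^ k :=
    calc μ.real (X c ⁻¹' strip c) = (μ.map (X c)).real (strip c) :=
          (map_measureReal_apply (hX c) (measurableSet_setOf_le_Iio_Iic _ _ _)).symm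
      _ ≤ _ := measureReal_setOf_le_Iio_Iic_le _ (by gcongr; linarith)
      _ = 1 / 4 ^ k := by rw [← sub_div, add_sub_cancel_left]
  calc μ.real (quadrantError μ X k z) = μ.real (⋃ c ∈ Finset.univ, X c ⁻¹' strip c) := by
        simp only [quadrantError, strip, Set.ofPred_exists, Finset.mem_univ, Set.iUnion_true]
        rfl
    _ ≤ ∑ c, μ.real (X c ⁻¹' strip c) := measureReal_biUnion_finset_le _ _
    _ ≤ ∑ _c : ι, 1 / 4 ^ k := Finset.sum_le_sum fun c _ => strip_le c
    _ = Fintype.card ι / 4 ^ k := by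
        rw [Finset.sum_const, Finset.card_univ, nsmul_eq_mul, mul_one_div]

end FiniteMeasure

variable [IsProbabilityMeasure μ]

lemma innerQuadrant_zero [Nonempty ι] (z : ι → ℝ) : innerQuadrant μ X 0 z = ∅ := by
  obtain ⟨c⟩ := ‹Nonempty ι›
  refine Set.eq_empty_of_forall_notMem fun y hy => ?_
  have cell_eq : quadrantCell μ X 0 z c = 0 :=
    Nat.lt_one_iff.1 (gridCell_lt_four_pow 0 measureReal_le_one)
  have := measureReal_nonneg.trans_lt (hy c)
  simp [cell_eq] at this

lemma exists_finset_quadrantCell_eq [Fintype ι] (k : ℕ) :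
    ∃ R : Finset (ι → ℝ), (R.card : ℝ) ≤ Real.exp (Fintype.card ι * Real.log 4 * k) ∧
      ∀ z, ∃ r ∈ R, quadrantCell μ X k z = quadrantCell μ X k r := by
  classical
  let cells : Finset (ι → ℕ) := Fintype.piFinset fun _ => Finset.range (4 ^ k)
  have cell_mem (z : ι → ℝ) : quadrantCell μ X k z ∈ cells :=
    Fintype.mem_piFinset.2 fun c => Finset.mem_range.2 (gridCell_lt_four_pow k measureReal_le_one)
  refine ⟨cells.image (quadrantCell μ X k).invFun, ?_, fun z =>
    ⟨_, Finset.mem_image_of_mem _ (cell_mem z), (Function.invFun_eq ⟨z, rfl⟩).symm⟩⟩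
  calc ((cells.image (quadrantCell μ X k).invFun).card : ℝ) ≤ cells.card := by
        exact_mod_cast Finset.card_image_le
    _ = (4 ^ k) ^ Fintype.card ι := by simp [cells]
    _ = Real.exp (Fintype.card ι * Real.log 4 * k) := by
        rw [mul_assoc, mul_comm (Real.log 4), Real.exp_nat_mul, Real.exp_nat_mul,
          Real.exp_log four_pos]

theorem isChaining_quadrant [Fintype ι] [Nonempty ι] (hX : ∀ c, Measurable (X c)) :
    IsChaining μ (Fintype.card ι) (Fintype.card ι * Real.log 4) (quadrant X)
      (innerQuadrant μ X) (quadrantError μ X) where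
  one_le_errorConst := by exact_mod_cast Fintype.card_pos
  entropy_nonneg := by positivity
  measurableSet_inner := measurableSet_innerQuadrant hX
  measurableSet_error := measurableSet_quadrantError hX
  inner_zero := innerQuadrant_zero
  inner_subset_succ := innerQuadrant_subset_succ
  inner_subset := innerQuadrant_subset
  sdiff_inner_subset := quadrant_sdiff_innerQuadrant_subset
  measure_error_le := measureReal_quadrantError_le hX
  exists_finset_classes k := by
    obtain ⟨R, card_le, hR⟩ := exists_finset_quadrantCell_eq (μ := μ) (X := X) k
    refine ⟨R, card_le, fun z => ?_⟩
    obtain ⟨r, hr, eq⟩ := hR z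
    refine ⟨r, hr, fun j hj => ?_⟩
    simp only [innerQuadrant, quadrantError, quadrantCell_eq_of_le hj eq, and_self]

end QuadrantChaining

section OneStep

variable {E ι : Type*} [AddCommGroup E]

section HalfSpace

lemma preimage_add_halfSpace_anti (φ : E →+ ℝ) (t : ℝ) {a b : E} (h : φ a ≤ φ b) :
    (· + b) ⁻¹' {y | φ y ≤ t} ⊆ (· + a) ⁻¹' {y | φ y ≤ t} :=
  fun s (hs : φ (s + b) ≤ t) => show φ (s + a) ≤ t by
    rw [map_add] at hs ⊢
    linarith

variable [MeasurableSpace E] (ν : Measure E) [IsFiniteMeasure ν] (φ : E →+ ℝ) (t : ℝ)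

lemma shiftProb_halfSpace_anti {a b : E} (h : φ a ≤ φ b) :
    shiftProb ν {y | φ y ≤ t} b ≤ shiftProb ν {y | φ y ≤ t} a :=
  measureReal_mono (preimage_add_halfSpace_anti φ t h)

lemma abs_shiftProb_halfSpace_zero_sub_le (a : E) :
    |shiftProb ν {y | φ y ≤ t} 0 - shiftProb ν {y | φ y ≤ t} a| ≤
      |shiftProb ν {y | φ y ≤ t} a - shiftProb ν {y | φ y ≤ t} (-a)| := by
  rcases le_total 0 (φ a) with h | h
  · have right := shiftProb_halfSpace_anti ν φ t (a := 0) (b := a) (by simpa using h)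
    have left := shiftProb_halfSpace_anti ν φ t (a := -a) (b := 0) (by simpa using h)
    rw [abs_of_nonneg (sub_nonneg.2 right), abs_of_nonpos (sub_nonpos.2 (right.trans left))]
    linarith
  · have left := shiftProb_halfSpace_anti ν φ t (a := a) (b := 0) (by simpa using h)
    have right := shiftProb_halfSpace_anti ν φ t (a := 0) (b := -a) (by simpa using h)
    rw [abs_of_nonpos (sub_nonpos.2 left), abs_of_nonneg (sub_nonneg.2 (right.trans left))]
    linarith

variable [MeasurableAdd E] {φ}

lemma measureReal_halfSpace_shift_sdiff_le (hφ : Measurable φ) (a b : E) :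
    ν.real ((· + a) ⁻¹' {y | φ y ≤ t} \ (· + b) ⁻¹' {y | φ y ≤ t}) ≤
      |shiftProb ν {y | φ y ≤ t} a - shiftProb ν {y | φ y ≤ t} b| := by
  rcases le_total (φ a) (φ b) with hab | hba
  · rw [measureReal_sdiff (preimage_add_halfSpace_anti φ t hab)
      (measurable_add_const b (measurableSet_le hφ measurable_const))]
    exact le_abs_self _
  · rw [Set.sdiff_eq_empty.2 (preimage_add_halfSpace_anti φ t hba), measureReal_empty]
    exact abs_nonneg _

end HalfSpace

variable [MeasurableSpace E] [Fintype ι] {X : ι → E →+ ℝ}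

lemma shiftProb_quadrant_sub_le [MeasurableAdd E] (hX : ∀ c, Measurable (X c))
    (ν : Measure E) [IsFiniteMeasure ν] (z : ι → ℝ) (a b : E) :
    shiftProb ν (quadrant (fun c => X c) z) a - shiftProb ν (quadrant (fun c => X c) z) b ≤
      ∑ c, |shiftProb ν {y | X c y ≤ z c} a - shiftProb ν {y | X c y ≤ z c} b| := by
  let strip (c : ι) : Set E := (· + a) ⁻¹' {y | X c y ≤ z c} \ (· + b) ⁻¹' {y | X c y ≤ z c}
  have cover : (· + a) ⁻¹' quadrant (fun c => X c) z ⊆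
      (· + b) ⁻¹' quadrant (fun c => X c) z ∪ ⋃ c ∈ Finset.univ, strip c := fun s hs => by
    by_cases hb : ∀ c, X c (s + b) ≤ z c
    · exact .inl hb
    · obtain ⟨c, hc⟩ := not_forall.1 hb
      exact .inr (Set.mem_biUnion (Finset.mem_univ c) ⟨hs c, hc⟩)
  rw [sub_le_iff_le_add']
  calc shiftProb ν (quadrant (fun c => X c) z) a
      ≤ ν.real ((· + b) ⁻¹' quadrant (fun c => X c) z ∪ ⋃ c ∈ Finset.univ, strip c) :=
        measureReal_mono cover
    _ ≤ shiftProb ν (quadrant (fun c => X c) z) b + ∑ c, ν.real (strip c) :=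
        (measureReal_union_le _ _).trans (add_le_add le_rfl (measureReal_biUnion_finset_le _ _))
    _ ≤ _ := by
        gcongr with c
        exact measureReal_halfSpace_shift_sdiff_le ν (z c) (hX c) a b

lemma abs_shiftProb_quadrant_sub_le [MeasurableAdd E] (hX : ∀ c, Measurable (X c))
    (ν : Measure E) [IsFiniteMeasure ν] (z : ι → ℝ) (a b : E) :
    |shiftProb ν (quadrant (fun c => X c) z) a - shiftProb ν (quadrant (fun c => X c) z) b| ≤
      ∑ c, |shiftProb ν {y | X c y ≤ z c} a - shiftProb ν {y | X c y ≤ z c} b| := by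
  refine abs_sub_le_iff.2 ⟨shiftProb_quadrant_sub_le hX ν z a b, ?_⟩
  simpa only [abs_sub_comm] using shiftProb_quadrant_sub_le hX ν z b a

variable [MeasurableAdd₂ E] (F : Measure E) [IsProbabilityMeasure F] (n : ℕ)

lemma abs_shiftProb_quadrant_zero_sub_le (hX : ∀ c, Measurable (X c)) (z : ι → ℝ) (a : E) :
    |shiftProb (convPow F n) (quadrant (fun c => X c) z) 0 -
        shiftProb (convPow F n) (quadrant (fun c => X c) z) a| ≤
      ∑ c, (|hajek F n {y | X c y ≤ z c} a| + |hajek F n {y | X c y ≤ z c} (-a)|) := by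
  refine (abs_shiftProb_quadrant_sub_le hX _ z 0 a).trans (Finset.sum_le_sum fun c _ => ?_)
  calc _ ≤ |shiftProb (convPow F n) {y | X c y ≤ z c} a -
          shiftProb (convPow F n) {y | X c y ≤ z c} (-a)| :=
        abs_shiftProb_halfSpace_zero_sub_le _ (X c) (z c) a
    _ = |hajek F n {y | X c y ≤ z c} a - hajek F n {y | X c y ≤ z c} (-a)| := by
        rw [hajek, hajek, sub_sub_sub_cancel_right]
    _ ≤ _ := abs_sub _ _

theorem abs_convPow_quadrant_sub_succ_le [MeasurableNeg E] [F.IsNegInvariant]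
    (hX : ∀ c, Measurable (X c)) (z : ι → ℝ) :
    |(convPow F n).real (quadrant (fun c => X c) z) -
        (convPow F (n + 1)).real (quadrant (fun c => X c) z)| ≤
      2 * Fintype.card ι / √(n + 1) := by
  set Q := quadrant (fun c => X c) z
  have hQ : MeasurableSet Q := measurableSet_quadrant hX z
  let v (c : ι) (a : E) : ℝ := |hajek F n {y | X c y ≤ z c} a|
  have meas_halfSpace (c : ι) : MeasurableSet {y | X c y ≤ z c} :=
    measurableSet_le (hX c) measurable_const
  have integrable_v (c : ι) : Integrable (v c) F := (integrable_hajek F n (meas_halfSpace c)).abs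
  have integrable_v_neg (c : ι) : Integrable (fun a => v c (-a)) F := (integrable_v c).comp_neg
  have integrable_add (c : ι) : Integrable (fun a => v c a + v c (-a)) F :=
    (integrable_v c).add (integrable_v_neg c)
  have integral_v_le (c : ι) : ∫ a, v c a ∂F ≤ 1 / √(n + 1) :=
    integral_abs_hajek_le F n (meas_halfSpace c)
  have diff_eq : (convPow F n).real Q - (convPow F (n + 1)).real Q =
      ∫ a, (shiftProb (convPow F n) Q 0 - shiftProb (convPow F n) Q a) ∂F := by
    rw [integral_sub (integrable_const _) (integrable_shiftProb _ _ hQ), integral_const,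
      probReal_univ, one_smul, shiftProb_zero, integral_shiftProb _ _ hQ, convPow_succ]
  calc |(convPow F n).real Q - (convPow F (n + 1)).real Q|
      ≤ ∫ a, ∑ c, (v c a + v c (-a)) ∂F := by
        rw [diff_eq, ← Real.norm_eq_abs]
        exact norm_integral_le_of_norm_le (integrable_finsetSum _ fun c _ => integrable_add c)
          (.of_forall fun a => abs_shiftProb_quadrant_zero_sub_le F n hX z a)
    _ = ∑ c, 2 * ∫ a, v c a ∂F := by
        rw [integral_finsetSum _ fun c _ => integrable_add c]
        refine Finset.sum_congr rfl fun c _ => ?_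
        rw [integral_add (integrable_v c) (integrable_v_neg c), integral_neg_eq_self (v c), two_mul]
    _ ≤ ∑ _c : ι, 2 * (1 / √(n + 1)) := by
        gcongr with c
        exact integral_v_le c
    _ = 2 * Fintype.card ι / √(n + 1) := by
        rw [Finset.sum_const, Finset.card_univ, nsmul_eq_mul]
        ring

end OneStep

/-- The constant `c` in the bound `c * (k / (n + 1) + 1 / √(n + 1))` on the distance between
`F ^ n` and `F ^ (n + k)` over the quadrants cut out by `D` coordinates. It is the constant that
the chaining bound `IsChaining.hasEnvelope_abs_sum_hajek` gives for these quadrants. -/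
noncomputable def quadrantConst (D : ℕ) : ℝ := 24 * D * (D * Real.log 4 + Real.exp 3) + 1

lemma two_mul_le_quadrantConst (D : ℕ) : 2 * D ≤ quadrantConst D := by
  have : 1 ≤ D * Real.log 4 + Real.exp 3 :=
    le_add_of_nonneg_of_le (by positivity) (Real.one_le_exp zero_le_three)
  rw [quadrantConst]
  nlinarith [Nat.cast_nonneg (α := ℝ) D]

lemma quadrantConst_pos (D : ℕ) : 0 < quadrantConst D := by
  rw [quadrantConst]
  positivity

section QuadrantDistance

variable {E ι : Type*} [AddCommGroup E] {X : ι → E →+ ℝ}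

lemma preimage_add_quadrant (a : E) (z : ι → ℝ) :
    (· + a) ⁻¹' quadrant (fun c => X c) z = quadrant (fun c => X c) fun c => z c - X c a := by
  ext y
  simp only [quadrant, Set.mem_preimage, Set.mem_ofPred_eq, map_add, le_sub_iff_add_le]

variable [MeasurableSpace E] [MeasurableAdd₂ E]

lemma abs_conv_quadrant_sub_le [Countable ι] (hX : ∀ c, Measurable (X c)) {μ ν : Measure E}
    [IsProbabilityMeasure μ] [IsProbabilityMeasure ν] (ρ : Measure E) [IsProbabilityMeasure ρ]
    {C : ℝ} (h : ∀ z, |μ.real (quadrant (fun c => X c) z) - ν.real (quadrant (fun c => X c) z)| ≤ C)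
    (z : ι → ℝ) :
    |(μ ∗ ρ).real (quadrant (fun c => X c) z) - (ν ∗ ρ).real (quadrant (fun c => X c) z)| ≤ C := by
  have hQ := measurableSet_quadrant hX z
  rw [← integral_shiftProb μ ρ hQ, ← integral_shiftProb ν ρ hQ,
    ← integral_sub (integrable_shiftProb μ ρ hQ) (integrable_shiftProb ν ρ hQ), ← Real.norm_eq_abs]
  refine (norm_integral_le_of_norm_le (integrable_const C) (.of_forall fun a => ?_)).trans_eq ?_
  · rw [Real.norm_eq_abs, shiftProb, shiftProb, preimage_add_quadrant]
    exact h _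
  · rw [integral_const, probReal_univ, one_smul]

variable [MeasurableNeg E] [Fintype ι] [Nonempty ι]
  (F : Measure E) [IsProbabilityMeasure F] [F.IsNegInvariant]

lemma abs_convPow_two_mul_quadrant_sub_le (hX : ∀ c, Measurable (X c)) (m : ℕ) (z : ι → ℝ) :
    |(convPow F (2 * m)).real (quadrant (fun c => X c) z) -
        (convPow F (2 * m + 2)).real (quadrant (fun c => X c) z)| ≤
      quadrantConst (Fintype.card ι) / (m + 1) := by
  rw [le_div_iff₀' m.cast_add_one_pos]
  refine HasEnvelope.abs_convPow_sub_le F m (measurableSet_quadrant hX z) ?_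
  simpa only [sub_eq_add_neg, preimage_add_quadrant, quadrantConst] using
    (isChaining_quadrant hX).hasEnvelope_abs_sum_hajek.comp fun u c => z c - X c (-u)

lemma abs_convPow_quadrant_sub_add_two_le (hX : ∀ c, Measurable (X c)) (n : ℕ) (z : ι → ℝ) :
    |(convPow F n).real (quadrant (fun c => X c) z) -
        (convPow F (n + 2)).real (quadrant (fun c => X c) z)| ≤
      2 * quadrantConst (Fintype.card ι) / (n + 1) := by
  have hC := quadrantConst_pos (Fintype.card ι)
  obtain ⟨m, rfl | rfl⟩ := n.even_or_odd'
  · calc _ ≤ quadrantConst (Fintype.card ι) / (m + 1) :=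
          abs_convPow_two_mul_quadrant_sub_le F hX m z
      _ = 2 * quadrantConst (Fintype.card ι) / (2 * m + 2) := by field_simp
      _ ≤ _ := by push_cast; gcongr; norm_num
  · calc _ ≤ quadrantConst (Fintype.card ι) / (m + 1) :=
          abs_conv_quadrant_sub_le hX F (abs_convPow_two_mul_quadrant_sub_le F hX m) z
      _ = _ := by push_cast; field_simp; ring

lemma abs_convPow_quadrant_sub_add_two_mul_le (hX : ∀ c, Measurable (X c)) (n j : ℕ) (z : ι → ℝ) :
    |(convPow F n).real (quadrant (fun c => X c) z) -
        (convPow F (n + 2 * j)).real (quadrant (fun c => X c) z)| ≤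
      quadrantConst (Fintype.card ι) * ((2 * j : ℕ) / (n + 1)) := by
  have hC := quadrantConst_pos (Fintype.card ι)
  induction j with
  | zero => simp
  | succ j ih =>
    calc _ ≤ _ := abs_sub_le _ ((convPow F (n + 2 * j)).real (quadrant (fun c => X c) z)) _
      _ ≤ quadrantConst (Fintype.card ι) * ((2 * j : ℕ) / (n + 1)) +
          2 * quadrantConst (Fintype.card ι) / ((n + 2 * j : ℕ) + 1) :=
        add_le_add ih (abs_convPow_quadrant_sub_add_two_le F hX (n + 2 * j) z)
      _ ≤ quadrantConst (Fintype.card ι) * ((2 * j : ℕ) / (n + 1)) +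
          2 * quadrantConst (Fintype.card ι) / (n + 1) := by
        gcongr
        exact Nat.le_add_right n _
      _ = _ := by push_cast; ring

theorem stmt7_general (hX : ∀ c, Measurable (X c)) (n k : ℕ) (z : ι → ℝ) :
    |(convPow F n).real (quadrant (fun c => X c) z) -
        (convPow F (n + k)).real (quadrant (fun c => X c) z)| ≤
      quadrantConst (Fintype.card ι) * (k / (n + 1) + 1 / √(n + 1)) := by
  have hC := quadrantConst_pos (Fintype.card ι)
  obtain ⟨j, rfl | rfl⟩ := k.even_or_odd'
  · refine (abs_convPow_quadrant_sub_add_two_mul_le F hX n j z).trans ?_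
    gcongr
    exact le_add_of_nonneg_right (by positivity)
  · rw [add_comm (2 * j), ← add_assoc]
    calc _ ≤ _ := abs_sub_le _ ((convPow F (n + 1)).real (quadrant (fun c => X c) z)) _
      _ ≤ 2 * Fintype.card ι / √(n + 1) +
          quadrantConst (Fintype.card ι) * ((2 * j : ℕ) / ((n + 1 : ℕ) + 1)) :=
        add_le_add (abs_convPow_quadrant_sub_succ_le F n hX z)
          (abs_convPow_quadrant_sub_add_two_mul_le F hX (n + 1) j z)
      _ ≤ quadrantConst (Fintype.card ι) / √(n + 1) +
          quadrantConst (Fintype.card ι) * ((1 + 2 * j : ℕ) / (n + 1)) := by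
        gcongr
        · exact two_mul_le_quadrantConst _
        · exact Nat.le_add_left _ 1
        · exact Nat.le_succ n
      _ = _ := by ring

end QuadrantDistance

lemma kolmDist_convPow_le {d : ℕ} (hd : 0 < d) (F : Measure (Euc d)) [IsProbabilityMeasure F]
    [F.IsNegInvariant] (n k : ℕ) :
    kolmDist (convPow F n) (convPow F (n + k)) ≤
      quadrantConst d * (k / (n + 1) + 1 / √(n + 1)) := by
  have : NeZero d := ⟨hd.ne'⟩
  let X (c : Fin d) : Euc d →+ ℝ := (EuclideanSpace.proj (𝕜 := ℝ) c : Euc d →L[ℝ] ℝ).toAddMonoidHom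
  have hX (c : Fin d) : Measurable (X c) := (EuclideanSpace.proj (𝕜 := ℝ) c).measurable
  refine ciSup_le fun x => (stmt7_general F hX n k x).trans_eq ?_
  rw [Fintype.card_fin]

lemma div_add_one_add_one_div_sqrt_le {n k : ℝ} (hn : 0 < n) (hk : k ≤ √n) :
    k / (n + 1) + 1 / √(n + 1) ≤ 2 / √n := by
  have linear : k / (n + 1) ≤ 1 / √n :=
    calc k / (n + 1) ≤ √n / n := by gcongr; exact le_add_of_nonneg_right zero_le_one
      _ = 1 / √n := Real.sqrt_div_self'
  have root : 1 / √(n + 1) ≤ 1 / √n := by gcongr; exact le_add_of_nonneg_right zero_le_one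
  calc k / (n + 1) + 1 / √(n + 1) ≤ 1 / √n + 1 / √n := add_le_add linear root
    _ = 2 / √n := by ring

theorem stmt7 :
    ∃ C : ℕ → ℝ, (∀ d, 0 < C d) ∧
      ∀ (d n : ℕ), 0 < d → 0 < n →
        ∀ F : Measure (Euc d), IsProbabilityMeasure F → IsSymmMeasure F →
          ∀ k : ℕ, (k : ℝ) ≤ Real.sqrt n →
            kolmDist (convPow F n) (convPow F (n + k)) ≤ C d / Real.sqrt n := by
  refine ⟨fun d => quadrantConst d * 2, fun d => mul_pos (quadrantConst_pos d) two_pos,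
    fun d n hd hn F _ hF k hk => ?_⟩
  have : F.IsNegInvariant := ⟨hF⟩
  rw [mul_div_assoc]
  exact (kolmDist_convPow_le hd F n k).trans <| mul_le_mul_of_nonneg_left
    (div_add_one_add_one_div_sqrt_le (Nat.cast_pos.2 hn) hk) (quadrantConst_pos d).le
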